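/- arXiv:1003.0887 — 6 statements merged into one kernel-verified Lean document; each statement's English description precedes it below -/
import Mathlib

section
/- Let ψ : ℝ^d → ℝ be a nonzero bounded continuous positive definite function, let Λ be the finite nonnegative Borel measure on ℝ^d with ψ(x) = ∫_{ℝ^d} e^{−i xᵀω} dΛ(ω) given by Bochner's theorem, and let k(x,y) = ψ(x − y). If the interior of supp(Λ) is nonempty, then k is cc-universal. -/
open MeasureTheory Filter Topology RealInnerProductSpace

/-- The topological support of a nonnegative Borel measure: the set of points all of
whose open neighbourhoods have positive measure. -/
def msupport {X : Type*} [TopologicalSpace X] [MeasurableSpace X]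
    (μ : MeasureTheory.Measure X) : Set X :=
  {x | ∀ U : Set X, IsOpen U → x ∈ U → μ U ≠ 0}

section FourierUniqueness

variable {E : Type*} [NormedAddCommGroup E] [InnerProductSpace ℝ E]
  [MeasurableSpace E] [BorelSpace E] {μ : Measure E}

lemma integrable_char_mul {G : E → ℂ} (hG : Integrable G μ) (t : E) :
    Integrable (fun x => Complex.exp (⟪x, t⟫ * Complex.I) * G x) μ := by
  refine hG.bdd_mul (c := 1) (Continuous.aestronglyMeasurable (by fun_prop)) ?_
  filter_upwards with x
  rw [Complex.norm_exp_ofReal_mul_I]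

variable [CompleteSpace E] [SecondCountableTopology E] [IsFiniteMeasure μ]

/-- A real density whose Fourier transform vanishes is zero almost everywhere. -/
lemma ae_eq_zero_of_integral_char_mul_ofReal {G : E → ℝ} (hG : Integrable G μ)
    (h : ∀ t : E, ∫ x, Complex.exp (⟪x, t⟫ * Complex.I) * (G x : ℂ) ∂μ = 0) :
    G =ᵐ[μ] 0 := by
  have hpos : AEMeasurable (fun x => ENNReal.ofReal (G x)) μ := hG.aemeasurable.ennreal_ofReal
  have hneg : AEMeasurable (fun x => ENNReal.ofReal (-G x)) μ :=
    hG.neg.aemeasurable.ennreal_ofReal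
  have := isFiniteMeasure_withDensity_ofReal hG.2
  have := isFiniteMeasure_withDensity_ofReal hG.neg.2
  have heq : μ.withDensity (fun x => ENNReal.ofReal (G x)) =
      μ.withDensity (fun x => ENNReal.ofReal (-G x)) := by
    apply Measure.ext_of_charFun
    funext t
    rw [charFun_apply, charFun_apply,
      integral_withDensity_eq_integral_toReal_smul₀ hpos (by simp),
      integral_withDensity_eq_integral_toReal_smul₀ hneg (by simp), ← sub_eq_zero,
      ← integral_sub, ← h t]
    · refine integral_congr_ae (Eventually.of_forall fun x => ?_)
      simp only [ENNReal.toReal_ofReal', Complex.real_smul]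
      rw [← sub_mul, ← Complex.ofReal_sub, max_zero_sub_max_neg_zero_eq_self, mul_comm]
    · simpa [ENNReal.toReal_ofReal', mul_comm] using
        integrable_char_mul (hG.pos_part.ofReal (𝕜 := ℂ)) t
    · simpa [ENNReal.toReal_ofReal', mul_comm] using
        integrable_char_mul (hG.neg_part.ofReal (𝕜 := ℂ)) t
  filter_upwards [(withDensity_eq_iff_of_sigmaFinite hpos hneg).1 heq] with x hx
  have := congrArg ENNReal.toReal hx
  simp only [ENNReal.toReal_ofReal'] at this
  rcases max_cases (G x) 0 with h1 | h1 <;> rcases max_cases (-G x) 0 with h2 | h2 <;>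
    simp only [Pi.zero_apply] <;> linarith

/-- A complex density whose Fourier transform vanishes is zero almost everywhere. -/
lemma ae_eq_zero_of_integral_char_mul {G : E → ℂ} (hG : Integrable G μ)
    (h : ∀ t : E, ∫ x, Complex.exp (⟪x, t⟫ * Complex.I) * G x ∂μ = 0) :
    G =ᵐ[μ] 0 := by
  have hG' : Integrable (fun x => (starRingEnd ℂ) (G x)) μ := 
    Complex.conjCLE.toContinuousLinearMap.integrable_comp hG
  have h' : ∀ t : E, ∫ x, Complex.exp (⟪x, t⟫ * Complex.I) * (starRingEnd ℂ) (G x) ∂μ = 0 := by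
    intro t
    have := congrArg (starRingEnd ℂ) (h (-t))
    rw [← integral_conj, map_zero] at this
    rw [← this]
    refine integral_congr_ae (Eventually.of_forall fun x => ?_)
    simp [← Complex.exp_conj]
  have hre := ae_eq_zero_of_integral_char_mul_ofReal hG.re fun t => by
    have := integral_add (integrable_char_mul hG t) (integrable_char_mul hG' t)
    rw [h, h', add_zero] at this
    rw [← mul_right_inj' (two_ne_zero (α := ℂ)), mul_zero, ← this, ← integral_const_mul]
    refine integral_congr_ae (Eventually.of_forall fun x => ?_)
    simp only [← mul_add, Complex.add_conj]
    simp only [RCLike.re_to_complex]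
    push_cast
    ring
  have him := ae_eq_zero_of_integral_char_mul_ofReal hG.im fun t => by
    have := integral_sub (integrable_char_mul hG t) (integrable_char_mul hG' t)
    rw [h, h', sub_zero] at this
    rw [← mul_right_inj' (mul_ne_zero (two_ne_zero (α := ℂ)) Complex.I_ne_zero), mul_zero, ← this,
      ← integral_const_mul]
    refine integral_congr_ae (Eventually.of_forall fun x => ?_)
    simp only [← mul_sub, Complex.sub_conj]
    simp only [RCLike.im_to_complex]
    push_cast
    ring
  filter_upwards [hre, him] with x h1 h2
  exact Complex.ext h1 h2

end FourierUniqueness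

/-- A continuous function vanishing almost everywhere vanishes on the support. -/
lemma eq_zero_on_msupport {X Y : Type*} [TopologicalSpace X] [MeasurableSpace X]
    [TopologicalSpace Y] [T1Space Y] [Zero Y] {μ : Measure X} {f : X → Y}
    (hf : Continuous f) (h : f =ᵐ[μ] 0) {x : X} (hx : x ∈ msupport μ) : f x = 0 := by
  by_contra hne
  exact hx {y | f y ≠ 0} (isOpen_compl_singleton.preimage hf) hne h

/-- If only the zero functional annihilates `p`, then `p` is dense. -/
lemma Submodule.topologicalClosure_eq_top_of_dual {𝕜 V : Type*} [RCLike 𝕜]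
    [NormedAddCommGroup V] [NormedSpace 𝕜 V] (p : Submodule 𝕜 V)
    (h : ∀ L : StrongDual 𝕜 V, (∀ v ∈ p, L v = 0) → L = 0) :
    p.topologicalClosure = ⊤ := by
  rw [eq_top_iff]
  intro v _
  have : IsClosed (p.topologicalClosure : Set V) := p.isClosed_topologicalClosure
  rw [← Submodule.Quotient.mk_eq_zero]
  refine SeparatingDual.eq_zero_of_forall_dual_eq_zero (R := 𝕜) fun g => ?_
  have hg := h (g.comp p.topologicalClosure.mkQL) fun w hw => by
    have : p.topologicalClosure.mkQ w = 0 :=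
      (Submodule.Quotient.mk_eq_zero _).2 (p.le_topologicalClosure hw)
    change g (p.topologicalClosure.mkQ w) = 0
    rw [this, map_zero]
  exact DFunLike.congr_fun hg v

section Exponentials

variable {E : Type*} [NormedAddCommGroup E] [InnerProductSpace ℝ E] {Z : Set E}

/-- The character `x ↦ e^{-i⟪x,ω⟫}` restricted to `Z`. -/
noncomputable def charOn (Z : Set E) (ω : E) : C(Z, ℂ) where
  toFun x := Complex.exp (-(Complex.I * (⟪(x : E), ω⟫ : ℝ)))
  continuous_toFun := by fun_prop

@[simp]
lemma charOn_apply (ω : E) (x : Z) :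
    charOn Z ω x = Complex.exp (-(Complex.I * (⟪(x : E), ω⟫ : ℝ))) := rfl

lemma charOn_zero : charOn Z (0 : E) = 1 := by
  ext x; simp

lemma charOn_add (ω η : E) : charOn Z (ω + η) = charOn Z ω * charOn Z η := by
  ext x
  simp only [charOn_apply, ContinuousMap.mul_apply, ← Complex.exp_add, inner_add_right]
  congr 1
  push_cast
  ring

lemma star_charOn (ω : E) : star (charOn Z ω) = charOn Z (-ω) := by
  ext x
  simp [← Complex.exp_conj]

lemma charOn_separates {x y : E} (hxy : x ≠ y) :
    ∃ ω : E, Complex.exp (-(Complex.I * (⟪x, ω⟫ : ℝ))) ≠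
      Complex.exp (-(Complex.I * (⟪y, ω⟫ : ℝ))) := by
  have hn : ‖x - y‖ ^ 2 ≠ 0 := by simpa [sub_eq_zero] using hxy
  refine ⟨(‖x - y‖ ^ 2)⁻¹ • (x - y), fun h => ?_⟩
  rw [← div_eq_one_iff_eq (Complex.exp_ne_zero _), ← Complex.exp_sub] at h
  have hin : ⟪x, (‖x - y‖ ^ 2)⁻¹ • (x - y)⟫ - ⟪y, (‖x - y‖ ^ 2)⁻¹ • (x - y)⟫ = (1 : ℝ) := by
    rw [← inner_sub_left, inner_smul_right, real_inner_self_eq_norm_sq, inv_mul_cancel₀ hn]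
  have hexp : -(Complex.I * (⟪x, (‖x - y‖ ^ 2)⁻¹ • (x - y)⟫ : ℝ)) -
      -(Complex.I * (⟪y, (‖x - y‖ ^ 2)⁻¹ • (x - y)⟫ : ℝ)) = ((-1 : ℝ) : ℂ) * Complex.I := by
    rw [← hin]
    push_cast
    ring
  rw [hexp] at h
  have := congrArg Complex.im h
  rw [Complex.exp_ofReal_mul_I_im, Real.sin_neg, Complex.one_im] at this
  exact (Real.sin_pos_of_pos_of_lt_pi one_pos (by linarith [Real.pi_gt_three])).ne'
    (neg_eq_zero.1 this)

variable [CompactSpace Z]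

lemma norm_charOn_le (ω : E) : ‖charOn Z ω‖ ≤ 1 := by
  rw [ContinuousMap.norm_le _ zero_le_one]
  intro x
  simp [Complex.norm_exp]

/-- By Stone–Weierstrass, the characters span a dense subspace of `C(Z, ℂ)`. -/
lemma span_charOn_topologicalClosure :
    (Submodule.span ℂ (Set.range (charOn Z))).topologicalClosure = ⊤ := by
  let M : Submonoid C(Z, ℂ) :=
    { carrier := Set.range (charOn Z)
      one_mem' := ⟨0, charOn_zero⟩
      mul_mem' := by
        rintro _ _ ⟨ω, rfl⟩ ⟨η, rfl⟩
        exact ⟨ω + η, charOn_add ω η⟩ }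
  let A : StarSubalgebra ℂ C(Z, ℂ) :=
    { Algebra.adjoin ℂ (Set.range (charOn Z)) with
      star_mem' := by
        intro f hf
        change f ∈ Algebra.adjoin ℂ (Set.range (charOn Z)) at hf
        change star f ∈ Algebra.adjoin ℂ (Set.range (charOn Z))
        induction hf using Algebra.adjoin_induction with
        | mem f hf =>
          obtain ⟨ω, rfl⟩ := hf
          exact Algebra.subset_adjoin ⟨-ω, (star_charOn ω).symm⟩
        | algebraMap r =>
          rw [← algebraMap_star_comm]
          exact Subalgebra.algebraMap_mem _ _
        | add f g _ _ hf hg => rw [star_add]; exact add_mem hf hg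
        | mul f g _ _ hf hg => rw [star_mul]; exact mul_mem hg hf }
  have hA : A.toSubalgebra = Algebra.adjoin ℂ (Set.range (charOn Z)) := rfl
  have hspan : Subalgebra.toSubmodule A.toSubalgebra =
      Submodule.span ℂ (Set.range (charOn Z)) := by
    rw [hA, Algebra.adjoin_eq_span]
    congr 1
    exact congrArg SetLike.coe M.closure_eq
  have hsep : A.SeparatesPoints := by
    intro x y hxy
    obtain ⟨ω, hω⟩ := charOn_separates (Subtype.coe_injective.ne hxy)
    exact ⟨charOn Z ω, ⟨charOn Z ω, Algebra.subset_adjoin ⟨ω, rfl⟩, rfl⟩, hω⟩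
  have htop := ContinuousMap.starSubalgebra_topologicalClosure_eq_top_of_separatesPoints A hsep
  rw [← hspan]
  apply SetLike.coe_injective
  have hcoe : closure (A : Set C(Z, ℂ)) = Set.univ := by
    rw [← StarSubalgebra.topologicalClosure_coe, htop, StarSubalgebra.coe_top]
  exact hcoe

variable [FiniteDimensional ℝ E]

lemma charOn_analytic : AnalyticOnNhd ℝ (charOn Z) Set.univ := by
  let A : E →ₗ[ℝ] C(Z, ℂ) :=
    { toFun := fun ω => ⟨fun x => -(Complex.I * (⟪(x : E), ω⟫ : ℝ)), by fun_prop⟩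
      map_add' := fun ω η => by
        ext x
        simp only [ContinuousMap.coe_mk, ContinuousMap.add_apply, inner_add_right]
        push_cast
        ring
      map_smul' := fun r ω => by
        ext x
        simp [inner_smul_right]
        ring }
  have hexp : charOn Z = fun ω => NormedSpace.exp (LinearMap.toContinuousLinearMap A ω) := by
    funext ω
    ext x
    have := NormedSpace.map_exp (ContinuousMap.evalAlgHom ℂ ℂ x)
      (continuous_eval_const x) (A ω)
    change charOn Z ω x = (ContinuousMap.evalAlgHom ℂ ℂ x) (NormedSpace.exp (A ω))
    rw [this, ← Complex.exp_eq_exp_ℂ]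
    rfl
  rw [hexp]
  intro ω _
  exact (NormedSpace.exp_analytic (𝕂 := ℝ) _).comp
    ((LinearMap.toContinuousLinearMap A).analyticAt ω)

lemma continuous_charOn : Continuous (charOn Z) :=
  continuous_iff_continuousAt.2 fun ω => (charOn_analytic ω (Set.mem_univ ω)).continuousAt

variable [MeasurableSpace E] [BorelSpace E]

/-- A functional on `C(Z, ℂ)` annihilating all translates of the Fourier transform of a measure
whose support has nonempty interior is zero. -/
lemma dual_eq_zero_of_forall_translate {μ : Measure E} [IsFiniteMeasure μ]
    (hμ : (interior (msupport μ)).Nonempty) (K : E → C(Z, ℂ))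
    (hK : ∀ y (x : Z), K y x = ∫ ω, Complex.exp (-(Complex.I * (⟪(x : E) - y, ω⟫ : ℝ))) ∂μ)
    (L : StrongDual ℂ C(Z, ℂ)) (hL : ∀ y, L (K y) = 0) : L = 0 := by
  have hcont : Continuous fun ω => L (charOn Z ω) := L.continuous.comp continuous_charOn
  have hint : Integrable (charOn Z) μ :=
    Integrable.of_bound continuous_charOn.aestronglyMeasurable 1
      (Eventually.of_forall norm_charOn_le)
  have hint' (y : E) :
      Integrable (fun ω => Complex.exp (⟪ω, y⟫ * Complex.I) • charOn Z ω) μ := by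
    refine hint.bdd_smul (φ := fun ω => Complex.exp (⟪ω, y⟫ * Complex.I)) 1
      (Continuous.aestronglyMeasurable (by fun_prop)) (Eventually.of_forall fun ω => ?_)
    rw [Complex.norm_exp_ofReal_mul_I]
  have hKint (y : E) : K y = ∫ ω, Complex.exp (⟪ω, y⟫ * Complex.I) • charOn Z ω ∂μ := by
    ext x
    have := (ContinuousMap.evalCLM ℂ x).integral_comp_comm (hint' y)
    change _ = (ContinuousMap.evalCLM ℂ x)
      (∫ ω, Complex.exp (⟪ω, y⟫ * Complex.I) • charOn Z ω ∂μ)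
    rw [← this, hK]
    refine integral_congr_ae (Eventually.of_forall fun ω => ?_)
    simp only [ContinuousMap.evalCLM_apply, ContinuousMap.smul_apply, charOn_apply, smul_eq_mul,
      ← Complex.exp_add, inner_sub_left, real_inner_comm ω y]
    congr 1
    push_cast
    ring
  have hae : (fun ω => L (charOn Z ω)) =ᵐ[μ] 0 := by
    refine ae_eq_zero_of_integral_char_mul (L.integrable_comp hint) fun y => ?_
    rw [← hL y, hKint, ← L.integral_comp_comm (hint' y)]
    simp
  have hanal : AnalyticOnNhd ℝ (fun ω => L (charOn Z ω)) Set.univ := fun ω hω =>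
    ((L.restrictScalars ℝ).analyticAt _).comp (charOn_analytic ω hω)
  obtain ⟨ω₀, hω₀⟩ := hμ
  have hzero : (fun ω => L (charOn Z ω)) = 0 := by
    refine hanal.eq_of_eventuallyEq (z₀ := ω₀) (fun _ _ => analyticAt_const) ?_
    filter_upwards [isOpen_interior.mem_nhds hω₀] with ω hω
    exact eq_zero_on_msupport hcont hae (interior_subset hω)
  refine ContinuousLinearMap.ext_on (s := Set.range (charOn Z)) ?_ ?_
  · exact Submodule.dense_iff_topologicalClosure_eq_top.2 span_charOn_topologicalClosure
  · rintro _ ⟨ω, rfl⟩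
    exact congrFun hzero ω

end Exponentials

/-- Let `ψ : ℝᵈ → ℝ` be a nonzero bounded continuous positive definite
function, let `Λ` be the finite nonnegative Borel measure with
`ψ(x) = ∫ e^{-i⟪x,ω⟫} dΛ(ω)` (Bochner), and let `k(x,y) = ψ(x−y)` with RKHS `H`.  If the
interior of `supp(Λ)` is nonempty, then `k` is cc-universal. -/
theorem stmt8 {d : ℕ}
    (ψ : EuclideanSpace ℝ (Fin d) → ℝ) (hψne : ψ ≠ 0)
    (hψcont : Continuous ψ) (hψbdd : ∃ C : ℝ, ∀ x, |ψ x| ≤ C)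
    (Λ : Measure (EuclideanSpace ℝ (Fin d))) [IsFiniteMeasure Λ]
    (hBochner : ∀ x, (ψ x : ℂ) =
      ∫ ω, Complex.exp (-(Complex.I * (⟪x, ω⟫ : ℝ))) ∂Λ)
    (k : EuclideanSpace ℝ (Fin d) → EuclideanSpace ℝ (Fin d) → ℝ)
    (hkψ : ∀ x y, k x y = ψ (x - y))
    {H : Type*} [NormedAddCommGroup H] [InnerProductSpace ℝ H] [CompleteSpace H]
    (T : H →ₗ[ℝ] (EuclideanSpace ℝ (Fin d) → ℝ)) (hT : Function.Injective T)
    (Φ : EuclideanSpace ℝ (Fin d) → H)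
    (hk : ∀ x y, k x y = ⟪Φ x, Φ y⟫)
    (hrepro : ∀ (f : H) x, T f x = ⟪f, Φ x⟫)
    (hsupp : (interior (msupport Λ)).Nonempty) :
    ∀ (Z : Set (EuclideanSpace ℝ (Fin d))), IsCompact Z →
      ∀ (g : C(Z, ℝ)) (ε : ℝ), 0 < ε →
        ∃ f : H, ∀ x : Z, |T f (x : EuclideanSpace ℝ (Fin d)) - g x| ≤ ε := by
  intro Z hZ g ε hε
  have : CompactSpace Z := isCompact_iff_compactSpace.1 hZ
  let K : EuclideanSpace ℝ (Fin d) → C(Z, ℂ) := fun y =>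
    ⟨fun x => (ψ ((x : EuclideanSpace ℝ (Fin d)) - y) : ℂ), by fun_prop⟩
  have hdense : (Submodule.span ℂ (Set.range K)).topologicalClosure = ⊤ :=
    Submodule.topologicalClosure_eq_top_of_dual _ fun L hL =>
      dual_eq_zero_of_forall_translate hsupp K (fun y x => hBochner _) L fun y =>
        hL _ (Submodule.subset_span ⟨y, rfl⟩)
  have hre : ∀ p ∈ Submodule.span ℂ (Set.range K),
      ∃ f : H, ∀ x : Z, T f (x : EuclideanSpace ℝ (Fin d)) = (p x).re := by
    intro p hp
    obtain ⟨c, rfl⟩ := Finsupp.mem_span_range_iff_exists_finsupp.1 hp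
    refine ⟨c.sum fun y a => a.re • Φ y, fun x => ?_⟩
    rw [hrepro, Finsupp.sum, sum_inner, Finsupp.sum, ContinuousMap.sum_apply, Complex.re_sum]
    refine Finset.sum_congr rfl fun y _ => ?_
    rw [real_inner_smul_left, real_inner_comm, ← hk, hkψ]
    simp [K]
  let gC : C(Z, ℂ) := ⟨fun x => (g x : ℂ), by fun_prop⟩
  have hg : gC ∈ closure (Submodule.span ℂ (Set.range K) : Set C(Z, ℂ)) := by
    rw [← Submodule.topologicalClosure_coe, hdense]
    trivial
  obtain ⟨p, hp, hdist⟩ := Metric.mem_closure_iff.1 hg ε hε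
  obtain ⟨f, hf⟩ := hre p hp
  refine ⟨f, fun x => ?_⟩
  rw [hf]
  calc |(p x).re - g x| = |(p x - gC x).re| := by simp [gC]
    _ ≤ ‖p x - gC x‖ := Complex.abs_re_le_norm _
    _ = dist (gC x) (p x) := by rw [dist_comm, dist_eq_norm]
    _ ≤ dist gC p := ContinuousMap.dist_apply_le_dist x
    _ ≤ ε := hdist.le
end

section
/- Let ψ be a continuous positive definite function on the d-torus T^d with Fourier representation ψ(x) = ∑_{n∈ℤ^d} A_ψ(n) e^{i xᵀn}, where A_ψ(n) ≥ 0, A_ψ(−n) = A_ψ(n) and ∑_{n∈ℤ^d} A_ψ(n) < ∞, and let k(x,y) = ψ((x − y) mod 2π). Then k is c-universal if and only if A_ψ(n) > 0 for all n ∈ ℤ^d. -/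
open MeasureTheory Filter Topology RealInnerProductSpace

/-- The character `x ↦ e^{i xᵀn}` on the `d`-torus `(ℝ/2πℤ)^d`, for a frequency
`n ∈ ℤ^d`; here `AddCircle.toCircle θ = e^{iθ}` on `ℝ/2πℤ`. -/
noncomputable def torusChar {d : ℕ} (n : Fin d → ℤ)
    (x : Fin d → AddCircle (2 * Real.pi)) : ℂ :=
  ∏ j, (AddCircle.toCircle (x j) : ℂ) ^ (n j)

section TorusChar

variable {d : ℕ}

local instance fact_two_pi_pos : Fact (0 < 2 * Real.pi) := ⟨Real.two_pi_pos⟩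

lemma continuous_torusChar (n : Fin d → ℤ) : Continuous (torusChar n) := by
  unfold torusChar
  refine continuous_finsetProd _ fun j _ => ?_
  have h : Continuous fun x : Fin d → AddCircle (2 * Real.pi) =>
      (AddCircle.toCircle (x j) ^ n j : Circle) :=
    (AddCircle.continuous_toCircle.comp (continuous_apply j)).zpow (n j)
  have hcoe : Continuous fun z : Circle => (z : ℂ) := by fun_prop
  simpa only [Function.comp_def, Circle.coe_zpow] using hcoe.comp h

lemma norm_torusChar (n : Fin d → ℤ) (x : Fin d → AddCircle (2 * Real.pi)) :
    ‖torusChar n x‖ = 1 := by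
  rw [torusChar, norm_prod]
  exact Finset.prod_eq_one fun j _ => by rw [norm_zpow, Circle.norm_coe, one_zpow]

lemma torusChar_zero_right (n : Fin d → ℤ) : torusChar n 0 = 1 := by
  simp [torusChar]

lemma torusChar_zero_left (x : Fin d → AddCircle (2 * Real.pi)) : torusChar 0 x = 1 := by
  simp [torusChar]

lemma torusChar_add_right (n : Fin d → ℤ) (x y : Fin d → AddCircle (2 * Real.pi)) :
    torusChar n (x + y) = torusChar n x * torusChar n y := by
  simp [torusChar, AddCircle.toCircle_add, mul_zpow, Finset.prod_mul_distrib]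

lemma torusChar_add_left (m n : Fin d → ℤ) (x : Fin d → AddCircle (2 * Real.pi)) :
    torusChar (m + n) x = torusChar m x * torusChar n x := by
  simp [torusChar, zpow_add₀, Finset.prod_mul_distrib]

lemma torusChar_neg_right (n : Fin d → ℤ) (x : Fin d → AddCircle (2 * Real.pi)) :
    torusChar n (-x) = torusChar (-n) x := by
  simp [torusChar, AddCircle.toCircle_neg]

lemma torusChar_neg_left (n : Fin d → ℤ) (x : Fin d → AddCircle (2 * Real.pi)) :
    torusChar (-n) x = starRingEnd ℂ (torusChar n x) := by
  simp [torusChar, ← Circle.coe_inv_eq_conj]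

lemma torusChar_single_one (j : Fin d) (x : Fin d → AddCircle (2 * Real.pi)) :
    torusChar (Pi.single j 1) x = AddCircle.toCircle (x j) := by
  rw [torusChar, Finset.prod_eq_single j]
  · simp
  · intro i _ hi
    simp [hi]
  · simp

/-- A nonzero frequency gives a nontrivial character. -/
lemma exists_torusChar_ne_one {n : Fin d → ℤ} (hn : n ≠ 0) : ∃ a, torusChar n a ≠ 1 := by
  obtain ⟨j, hj⟩ := Function.ne_iff.mp hn
  have hj' : ((n j : ℤ) : ℂ) ≠ 0 := by exact_mod_cast hj
  refine ⟨Pi.single j ((Real.pi / n j : ℝ) : AddCircle (2 * Real.pi)), ?_⟩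
  rw [torusChar, Finset.prod_eq_single j]
  · have hπ : 2 * Real.pi / (2 * Real.pi) = 1 := div_self Real.two_pi_pos.ne'
    rw [Pi.single_eq_same, AddCircle.toCircle_apply_mk, hπ, one_mul, Circle.coe_exp,
      ← Complex.exp_int_mul]
    have : ((n j : ℤ) : ℂ) * (((Real.pi / n j : ℝ) : ℂ) * Complex.I) = Real.pi * Complex.I := by
      push_cast
      field_simp
    rw [this, Complex.exp_pi_mul_I]
    norm_num
  · intro i _ hi
    simp [hi]
  · simp

/-- The linear span of the characters is uniformly dense in the continuous functions. -/
lemma span_torusChar_closure_eq_top :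
    (Submodule.span ℂ (Set.range fun n : Fin d → ℤ =>
      (⟨torusChar n, continuous_torusChar n⟩ :
        C(Fin d → AddCircle (2 * Real.pi), ℂ)))).topologicalClosure = ⊤ := by
  set χ : (Fin d → ℤ) → C(Fin d → AddCircle (2 * Real.pi), ℂ) :=
    fun n => ⟨torusChar n, continuous_torusChar n⟩ with hχ
  let S : StarSubalgebra ℂ C(Fin d → AddCircle (2 * Real.pi), ℂ) :=
    { toSubalgebra := Algebra.adjoin ℂ (Set.range χ)
      star_mem' := by
        change Algebra.adjoin ℂ (Set.range χ) ≤ star (Algebra.adjoin ℂ (Set.range χ))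
        refine Algebra.adjoin_le ?_
        rintro _ ⟨n, rfl⟩
        refine Algebra.subset_adjoin ⟨-n, ?_⟩
        ext1 x
        simp [hχ, torusChar_neg_left] }
  have hS : S.toSubalgebra.toSubmodule = Submodule.span ℂ (Set.range χ) := by
    apply Algebra.adjoin_eq_span_of_subset
    refine .trans (fun x => Submonoid.closure_induction (fun _ => id) ⟨0, ?_⟩ ?_)
      Submodule.subset_span
    · ext x
      simp [hχ, torusChar_zero_left]
    · rintro _ _ _ _ ⟨m, rfl⟩ ⟨n, rfl⟩
      exact ⟨m + n, by ext x; simp [hχ, torusChar_add_left]⟩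
  have hsep : S.SeparatesPoints := by
    intro x y hxy
    obtain ⟨j, hj⟩ := Function.ne_iff.mp hxy
    refine ⟨_, ⟨χ (Pi.single j 1), Algebra.subset_adjoin ⟨Pi.single j 1, rfl⟩, rfl⟩, ?_⟩
    simp only [hχ, ContinuousMap.coe_mk, torusChar_single_one]
    exact fun h => hj (AddCircle.injective_toCircle Real.two_pi_pos.ne' (Circle.ext h))
  rw [← hS]
  exact congr_arg (Subalgebra.toSubmodule <| StarSubalgebra.toSubalgebra ·)
    (ContinuousMap.starSubalgebra_topologicalClosure_eq_top_of_separatesPoints S hsep)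

/-- Every real continuous function is uniformly close to the real part of a trigonometric
polynomial. -/
lemma exists_re_span_torusChar_close (g : C(Fin d → AddCircle (2 * Real.pi), ℝ)) {ε : ℝ}
    (hε : 0 < ε) :
    ∃ F ∈ Submodule.span ℂ (Set.range fun n : Fin d → ℤ =>
      (⟨torusChar n, continuous_torusChar n⟩ : C(Fin d → AddCircle (2 * Real.pi), ℂ))),
      ∀ x, |(F x).re - g x| ≤ ε := by
  let G : C(Fin d → AddCircle (2 * Real.pi), ℂ) :=
    ⟨fun x => (g x : ℂ), Complex.continuous_ofReal.comp g.continuous⟩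
  have hG : G ∈ (Submodule.span ℂ (Set.range fun n : Fin d → ℤ =>
      (⟨torusChar n, continuous_torusChar n⟩ :
        C(Fin d → AddCircle (2 * Real.pi), ℂ)))).topologicalClosure := by
    rw [span_torusChar_closure_eq_top]
    trivial
  obtain ⟨F, hF, hdist⟩ := Metric.mem_closure_iff.mp hG ε hε
  refine ⟨F, hF, fun x => ?_⟩
  calc |(F x).re - g x| = |(F x - G x).re| := by simp [G]
    _ ≤ ‖F x - G x‖ := Complex.abs_re_le_norm _
    _ = dist (G x) (F x) := by rw [dist_comm, dist_eq_norm]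
    _ ≤ dist G F := ContinuousMap.dist_apply_le_dist x
    _ ≤ ε := hdist.le

variable (μ : Measure (Fin d → AddCircle (2 * Real.pi))) [μ.IsAddHaarMeasure]

/-- A nontrivial character has vanishing mean. -/
lemma integral_torusChar_of_ne_zero {n : Fin d → ℤ} (hn : n ≠ 0) :
    ∫ x, torusChar n x ∂μ = 0 := by
  obtain ⟨a, ha⟩ := exists_torusChar_ne_one hn
  have h := integral_add_right_eq_self (μ := μ) (torusChar n) a
  simp_rw [torusChar_add_right] at h
  rw [integral_mul_const] at h
  have h' : (∫ x, torusChar n x ∂μ) * (torusChar n a - 1) = 0 := by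
    rw [mul_sub, h, mul_one, sub_self]
  exact (mul_eq_zero.mp h').resolve_right (sub_ne_zero.mpr ha)

variable [IsProbabilityMeasure μ] [μ.IsNegInvariant]

/-- The characters are eigenfunctions of convolution with an absolutely convergent Fourier
series, with the Fourier coefficients as eigenvalues. -/
lemma integral_torusChar_mul_fourierSeries {A : (Fin d → ℤ) → ℝ} (hA0 : ∀ n, 0 ≤ A n)
    (hAsum : Summable A) {ψ : (Fin d → AddCircle (2 * Real.pi)) → ℝ}
    (hψA : ∀ x, (ψ x : ℂ) = ∑' n : Fin d → ℤ, (A n : ℂ) * torusChar n x)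
    (n : Fin d → ℤ) (x : Fin d → AddCircle (2 * Real.pi)) :
    ∫ y, torusChar n y * (ψ (x - y) : ℂ) ∂μ = A n * torusChar n x := by
  rw [← integral_sub_left_eq_self _ μ x]
  have hterm : ∀ y, torusChar n (x - y) * (ψ (x - (x - y)) : ℂ) =
      torusChar n x * ∑' m, (A m : ℂ) * torusChar (m - n) y := by
    intro y
    rw [sub_sub_cancel, hψA, sub_eq_add_neg x y, torusChar_add_right, torusChar_neg_right,
      mul_assoc, ← tsum_mul_left]
    congr 1
    refine tsum_congr fun m => ?_
    rw [sub_eq_add_neg, torusChar_add_left]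
    ring
  simp_rw [hterm]
  have hcont : ∀ m, Continuous fun y => (A m : ℂ) * torusChar (m - n) y :=
    fun m => continuous_const.mul (continuous_torusChar _)
  have hint : ∀ m, Integrable (fun y => (A m : ℂ) * torusChar (m - n) y) μ :=
    fun m => (hcont m).integrable_of_hasCompactSupport (HasCompactSupport.of_compactSpace _)
  have hnorm : ∀ m, ∫ y, ‖(A m : ℂ) * torusChar (m - n) y‖ ∂μ = A m := by
    intro m
    simp [norm_torusChar, abs_of_nonneg (hA0 m)]
  have hswap := integral_tsum_of_summable_integral_norm hint (by simpa only [hnorm] using hAsum)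
  rw [integral_const_mul, ← hswap, tsum_eq_single n]
  · rw [integral_const_mul, sub_self]
    simp [torusChar_zero_left, mul_comm]
  · intro m hm
    rw [integral_const_mul, integral_torusChar_of_ne_zero μ (sub_ne_zero.mpr hm), mul_zero]

/-- Real form of `integral_torusChar_mul_fourierSeries`. -/
lemma integral_re_mul_torusChar_mul_fourierSeries {A : (Fin d → ℤ) → ℝ} (hA0 : ∀ n, 0 ≤ A n)
    (hAsum : Summable A) {ψ : (Fin d → AddCircle (2 * Real.pi)) → ℝ} (hψ : Continuous ψ)
    (hψA : ∀ x, (ψ x : ℂ) = ∑' n : Fin d → ℤ, (A n : ℂ) * torusChar n x)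
    (c : ℂ) (n : Fin d → ℤ) (x : Fin d → AddCircle (2 * Real.pi)) :
    ∫ y, (c * torusChar n y).re * ψ (x - y) ∂μ = A n * (c * torusChar n x).re := by
  have h := integral_torusChar_mul_fourierSeries μ hA0 hAsum hψA n x
  have hcont : Continuous fun y => c * (torusChar n y * (ψ (x - y) : ℂ)) := by
    have := continuous_torusChar n
    fun_prop
  have hre := integral_re (𝕜 := ℂ) (μ := μ)
    (hcont.integrable_of_hasCompactSupport (HasCompactSupport.of_compactSpace _))
  rw [integral_const_mul, h] at hre
  calc ∫ y, (c * torusChar n y).re * ψ (x - y) ∂μ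
      = ∫ y, RCLike.re (c * (torusChar n y * (ψ (x - y) : ℂ))) ∂μ := by
        refine integral_congr_ae (.of_forall fun y => ?_)
        simp only [← mul_assoc]
        exact (Complex.re_mul_ofReal _ _).symm
    _ = RCLike.re (c * (A n * torusChar n x)) := hre
    _ = A n * (c * torusChar n x).re := by
        rw [mul_left_comm]
        exact Complex.re_ofReal_mul _ _

end TorusChar

/-- A feature map of a continuous translation invariant kernel is continuous. -/
lemma continuous_of_inner_eq_sub {G H : Type*} [AddGroup G] [TopologicalSpace G]
    [IsTopologicalAddGroup G] [NormedAddCommGroup H] [InnerProductSpace ℝ H] {ψ : G → ℝ}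
    (hψ : Continuous ψ) {Φ : G → H} (hΦ : ∀ x y, ⟪Φ x, Φ y⟫ = ψ (x - y)) : Continuous Φ := by
  refine continuous_iff_continuousAt.mpr fun a => ?_
  have hnorm : ∀ x, ‖Φ x - Φ a‖ = √(ψ 0 - 2 * ψ (x - a) + ψ 0) := by
    intro x
    have hself : ∀ z, ψ 0 = ‖Φ z‖ ^ 2 := fun z => by
      rw [← real_inner_self_eq_norm_sq, hΦ, sub_self]
    rw [← Real.sqrt_sq (norm_nonneg (Φ x - Φ a)), norm_sub_sq_real, ← hself, ← hself, hΦ]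
  rw [ContinuousAt, tendsto_iff_norm_sub_tendsto_zero]
  simp_rw [hnorm]
  have hc : Continuous fun x => √(ψ 0 - 2 * ψ (x - a) + ψ 0) := by fun_prop
  have h0 : √(ψ 0 - 2 * ψ (a - a) + ψ 0) = 0 := by
    rw [sub_self, Real.sqrt_eq_zero']
    linarith
  simpa only [h0] using hc.tendsto a

/-- Let `ψ` be a continuous positive definite function on the `d`-torus
`T^d = (ℝ/2πℤ)^d` with Fourier representation `ψ(x) = ∑_{n∈ℤ^d} A_ψ(n) e^{i xᵀn}`, where
`A_ψ(n) ≥ 0`, `A_ψ(−n) = A_ψ(n)` and `∑ A_ψ(n) < ∞`, and let `k(x,y) = ψ(x−y)` with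
RKHS `H`.  Then `k` is c-universal iff `A_ψ(n) > 0` for all `n ∈ ℤ^d`. -/
theorem stmt9 {d : ℕ}
    (ψ : (Fin d → AddCircle (2 * Real.pi)) → ℝ) (hψcont : Continuous ψ)
    (A : (Fin d → ℤ) → ℝ)
    (hA0 : ∀ n, 0 ≤ A n) (hAsymm : ∀ n, A (-n) = A n) (hAsum : Summable A)
    (hψA : ∀ x, (ψ x : ℂ) = ∑' n : Fin d → ℤ, (A n : ℂ) * torusChar n x)
    (k : (Fin d → AddCircle (2 * Real.pi)) → (Fin d → AddCircle (2 * Real.pi)) → ℝ)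
    (hkψ : ∀ x y, k x y = ψ (x - y))
    {H : Type*} [NormedAddCommGroup H] [InnerProductSpace ℝ H] [CompleteSpace H]
    (T : H →ₗ[ℝ] ((Fin d → AddCircle (2 * Real.pi)) → ℝ)) (hT : Function.Injective T)
    (Φ : (Fin d → AddCircle (2 * Real.pi)) → H)
    (hk : ∀ x y, k x y = ⟪Φ x, Φ y⟫)
    (hrepro : ∀ (f : H) x, T f x = ⟪f, Φ x⟫) :
    (∀ (g : C((Fin d → AddCircle (2 * Real.pi)), ℝ)) (ε : ℝ), 0 < ε →
        ∃ f : H, ∀ x, |T f x - g x| ≤ ε) ↔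
      ∀ n : Fin d → ℤ, 0 < A n := by
  have : Fact (0 < 2 * Real.pi) := ⟨Real.two_pi_pos⟩
  let μ : Measure (Fin d → AddCircle (2 * Real.pi)) :=
    Measure.pi fun _ => AddCircle.haarAddCircle
  have : μ.IsNegInvariant := Measure.pi.isNegInvariant _
  have hΦψ : ∀ x y, ⟪Φ x, Φ y⟫ = ψ (x - y) := fun x y => by rw [← hk, hkψ]
  have hΦ : Continuous Φ := continuous_of_inner_eq_sub hψcont hΦψ
  have hwcont : ∀ (c : ℂ) (n : Fin d → ℤ), Continuous fun y => (c * torusChar n y).re := fun c n =>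
    Complex.continuous_re.comp (continuous_const.mul (continuous_torusChar n))
  have hint : ∀ (c : ℂ) (n : Fin d → ℤ), Integrable (fun y => (c * torusChar n y).re • Φ y) μ := fun c n =>
    ((hwcont c n).smul hΦ).integrable_of_hasCompactSupport (HasCompactSupport.of_compactSpace _)
  -- Pairing with the mean of `w • Φ` integrates against `w`.
  have hpair : ∀ (c : ℂ) (n : Fin d → ℤ) (f : H), ⟪f, ∫ y, (c * torusChar n y).re • Φ y ∂μ⟫ =
      ∫ y, (c * torusChar n y).re * T f y ∂μ := by
    intro c n f
    rw [← integral_inner (hint c n)]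
    simp_rw [real_inner_smul_right, hrepro]
  have hTv : ∀ (c : ℂ) (n : Fin d → ℤ), T (∫ y, (c * torusChar n y).re • Φ y ∂μ) =
      fun x => A n * (c * torusChar n x).re := by
    intro c n
    funext x
    rw [hrepro, real_inner_comm, hpair,
      ← integral_re_mul_torusChar_mul_fourierSeries μ hA0 hAsum hψcont hψA c n x]
    refine integral_congr_ae (.of_forall fun y => ?_)
    simp only [hrepro, hΦψ]
  constructor
  · intro hdense n
    refine (hA0 n).lt_of_ne' fun hAn => ?_
    have hv : ∫ y, ((1 : ℂ) * torusChar n y).re • Φ y ∂μ = 0 := by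
      apply hT
      rw [hTv, hAn, map_zero]
      funext x
      simp
    set w : (Fin d → AddCircle (2 * Real.pi)) → ℝ := fun y => ((1 : ℂ) * torusChar n y).re with hw
    have hwc : Continuous w := hwcont 1 n
    have hw1 : ∀ y, |w y| ≤ 1 := fun y =>
      (Complex.abs_re_le_norm _).trans (by simp [norm_torusChar])
    have hpos : 0 < ∫ y, w y * w y ∂μ := by
      refine (hwc.mul hwc).integral_pos_of_hasCompactSupport_nonneg_nonzero
        (HasCompactSupport.of_compactSpace _) (fun y => mul_self_nonneg _) (x := 0) ?_
      simp [hw, torusChar_zero_right]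
    obtain ⟨f, hf⟩ := hdense ⟨w, hwc⟩ _ (half_pos hpos)
    have hTf : Continuous (T f) := by
      rw [show T f = fun x => ⟪f, Φ x⟫ from funext (hrepro f)]
      exact continuous_const.inner hΦ
    have hzero : ∫ y, w y * T f y ∂μ = 0 := by
      rw [← hpair, hv, inner_zero_right]
    have hdiff : ∫ y, w y * w y ∂μ = ∫ y, w y * (w y - T f y) ∂μ := by
      simp_rw [mul_sub]
      rw [integral_sub, hzero, sub_zero]
      · exact (hwc.mul hwc).integrable_of_hasCompactSupport (HasCompactSupport.of_compactSpace _)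
      · exact (hwc.mul hTf).integrable_of_hasCompactSupport (HasCompactSupport.of_compactSpace _)
    have hle : ‖∫ y, w y * (w y - T f y) ∂μ‖ ≤ (∫ y, w y * w y ∂μ) / 2 * μ.real Set.univ := by
      refine norm_integral_le_of_norm_le_const (.of_forall fun y => ?_)
      rw [Real.norm_eq_abs, abs_mul, abs_sub_comm, ← one_mul ((∫ y, w y * w y ∂μ) / 2)]
      exact mul_le_mul (hw1 y) (hf y) (abs_nonneg _) zero_le_one
    rw [← hdiff, Real.norm_eq_abs, abs_of_pos hpos, probReal_univ] at hle
    linarith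
  · intro hA g ε hε
    obtain ⟨F, hF, hFg⟩ := exists_re_span_torusChar_close g hε
    have hrange : ∀ c : ℂ, ∃ f : H, T f = fun x => (c * F x).re := by
      clear hFg
      induction hF using Submodule.span_induction with
      | mem F hF =>
        obtain ⟨n, rfl⟩ := hF
        intro c
        refine ⟨(A n)⁻¹ • ∫ y, (c * torusChar n y).re • Φ y ∂μ, ?_⟩
        rw [map_smul, hTv]
        funext x
        simp only [Pi.smul_apply, smul_eq_mul, inv_mul_cancel_left₀ (hA n).ne',
          ContinuousMap.coe_mk]
      | zero => exact fun c => ⟨0, by rw [map_zero]; funext x; simp⟩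
      | add F₁ F₂ _ _ h₁ h₂ =>
        intro c
        obtain ⟨f₁, hf₁⟩ := h₁ c
        obtain ⟨f₂, hf₂⟩ := h₂ c
        refine ⟨f₁ + f₂, ?_⟩
        rw [map_add, hf₁, hf₂]
        funext x
        simp only [Pi.add_apply, ContinuousMap.add_apply, mul_add, Complex.add_re]
      | smul a F _ h =>
        intro c
        obtain ⟨f, hf⟩ := h (c * a)
        refine ⟨f, ?_⟩
        rw [hf]
        funext x
        simp only [ContinuousMap.smul_apply, smul_eq_mul, mul_assoc]
    obtain ⟨f, hf⟩ := hrange 1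
    exact ⟨f, fun x => by simpa only [hf, one_mul] using hFg x⟩
end

section
/- Let X be a locally compact Hausdorff space and let k be a bounded symmetric positive definite kernel on X of the form k(x,y) = ∑_{j∈I} φ_j(x) φ_j(y), where I is a countable index set, each φ_j : X → ℝ is continuous, the series converges uniformly on X × X, and k(·,x) ∈ C_0(X) for all x ∈ X. Then k is c0-universal if and only if for every nonzero μ ∈ M_b(X) there exists some j ∈ I with ∫_X φ_j dμ ≠ 0. -/
open MeasureTheory Filter Topology RealInnerProductSpace
open scoped ZeroAtInfty

/-- Integral of a vector-valued function with respect to a finite signed measure,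
defined via the Jordan decomposition. -/
noncomputable def svInt {X : Type*} [MeasurableSpace X] {E : Type*}
    [NormedAddCommGroup E] [NormedSpace ℝ E]
    (μ : MeasureTheory.SignedMeasure X) (f : X → E) : E :=
  (∫ x, f x ∂μ.toJordanDecomposition.posPart) - ∫ x, f x ∂μ.toJordanDecomposition.negPart

open scoped NNReal CompactlySupported BoundedContinuousFunction

section PositivePart

variable {X : Type*} [TopologicalSpace X]

namespace CompactlySupportedContinuousMap

/-- The positive part of a functional `ℓ` on the cone `C_c(X, ℝ≥0)`. -/
noncomputable def posPartFun (ℓ : C_c(X, ℝ≥0) →ₗ[ℝ≥0] ℝ) (f : C_c(X, ℝ≥0)) : ℝ :=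
  sSup (ℓ '' Set.Iic f)

/-- A functional on `C_c(X, ℝ≥0)` is bounded by `M` if it is bounded by `M * c` on functions
which are at most `c`. -/
def IsBoundedBy (ℓ : C_c(X, ℝ≥0) →ₗ[ℝ≥0] ℝ) (M : ℝ) : Prop :=
  ∀ (f : C_c(X, ℝ≥0)) (c : ℝ≥0), (∀ x, f x ≤ c) → |ℓ f| ≤ M * c

variable {ℓ : C_c(X, ℝ≥0) →ₗ[ℝ≥0] ℝ} {M : ℝ}

lemma exists_forall_le (f : C_c(X, ℝ≥0)) : ∃ c : ℝ≥0, ∀ x, f x ≤ c := by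
  obtain ⟨c, hc⟩ := (f.hasCompactSupport.isCompact_range f.continuous).bddAbove
  exact ⟨c, fun x => hc ⟨x, rfl⟩⟩

lemma IsBoundedBy.isLUB (h : IsBoundedBy ℓ M) (f : C_c(X, ℝ≥0)) :
    IsLUB (ℓ '' Set.Iic f) (posPartFun ℓ f) := by
  obtain ⟨c, hc⟩ := exists_forall_le f
  refine isLUB_csSup ⟨ℓ f, f, Set.self_mem_Iic, rfl⟩ ⟨M * c, ?_⟩
  rintro _ ⟨g, hg, rfl⟩
  exact (le_abs_self _).trans (h g c fun x => (hg x).trans (hc x))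

lemma IsBoundedBy.le_posPartFun (h : IsBoundedBy ℓ M) {f g : C_c(X, ℝ≥0)} (hg : g ≤ f) :
    ℓ g ≤ posPartFun ℓ f :=
  (h.isLUB f).1 ⟨g, hg, rfl⟩

lemma IsBoundedBy.posPartFun_le (h : IsBoundedBy ℓ M) {f : C_c(X, ℝ≥0)} {a : ℝ}
    (ha : ∀ g ≤ f, ℓ g ≤ a) : posPartFun ℓ f ≤ a := by
  refine (h.isLUB f).2 ?_
  rintro _ ⟨g, hg, rfl⟩
  exact ha g hg

lemma IsBoundedBy.posPartFun_nonneg (h : IsBoundedBy ℓ M) (f : C_c(X, ℝ≥0)) :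
    0 ≤ posPartFun ℓ f := by
  have := h.le_posPartFun (f := f) (g := 0) fun x => zero_le
  simpa using this

lemma IsBoundedBy.posPartFun_add (h : IsBoundedBy ℓ M) (f₁ f₂ : C_c(X, ℝ≥0)) :
    posPartFun ℓ (f₁ + f₂) = posPartFun ℓ f₁ + posPartFun ℓ f₂ := by
  apply le_antisymm
  · refine h.posPartFun_le fun g hg => ?_
    obtain ⟨g₂, hg₂⟩ := CompactlySupportedContinuousMap.exists_add_of_le
      (inf_le_left : g ⊓ f₁ ≤ g)
    have hle : g₂ ≤ f₂ := fun x => by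
      have h1 : min (g x) (f₁ x) + g₂ x = g x := congr($hg₂ x)
      have h2 : g x ≤ f₁ x + f₂ x := hg x
      change g₂ x ≤ f₂ x
      rcases min_cases (g x) (f₁ x) with ⟨h3, -⟩ | ⟨h3, -⟩
      · rw [h3] at h1
        rw [add_eq_left.mp h1]
        exact zero_le
      · rw [h3] at h1
        rw [← h1] at h2
        exact le_of_add_le_add_left h2
    rw [← hg₂, map_add]
    exact add_le_add (h.le_posPartFun inf_le_right) (h.le_posPartFun hle)
  · rw [← le_sub_iff_add_le]
    refine h.posPartFun_le fun g₁ hg₁ => ?_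
    rw [le_sub_comm]
    refine h.posPartFun_le fun g₂ hg₂ => ?_
    rw [le_sub_iff_add_le', ← map_add]
    exact h.le_posPartFun (add_le_add hg₁ hg₂)

lemma IsBoundedBy.smul_posPartFun_le (h : IsBoundedBy ℓ M) (c : ℝ≥0) (f : C_c(X, ℝ≥0)) :
    c * posPartFun ℓ f ≤ posPartFun ℓ (c • f) := by
  rcases eq_or_ne c 0 with rfl | hc
  · simpa using h.posPartFun_nonneg _
  · have hc' : (0 : ℝ) < c := by positivity
    rw [← le_div_iff₀' hc']
    refine h.posPartFun_le fun g hg => ?_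
    rw [le_div_iff₀' hc']
    have := h.le_posPartFun (f := c • f) (g := c • g) fun x => mul_le_mul_right (hg x) c
    simpa [NNReal.smul_def] using this

lemma IsBoundedBy.posPartFun_smul (h : IsBoundedBy ℓ M) (c : ℝ≥0) (f : C_c(X, ℝ≥0)) :
    posPartFun ℓ (c • f) = c * posPartFun ℓ f := by
  refine le_antisymm ?_ (h.smul_posPartFun_le c f)
  rcases eq_or_ne c 0 with rfl | hc
  · refine h.posPartFun_le fun g hg => ?_
    have : g = 0 := by
      ext x
      have := hg x
      simpa using this
    simp [this]
  · have hc' : (0 : ℝ) < c := by positivity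
    have := h.smul_posPartFun_le c⁻¹ (c • f)
    rw [smul_smul, inv_mul_cancel₀ hc, one_smul, NNReal.coe_inv, inv_mul_le_iff₀ hc'] at this
    exact this

/-- A bounded functional on the cone `C_c(X, ℝ≥0)` is a difference of two positive ones. -/
lemma IsBoundedBy.exists_eq_sub (h : IsBoundedBy ℓ M) :
    ∃ P N : C_c(X, ℝ≥0) →ₗ[ℝ≥0] ℝ≥0, (∀ f, ℓ f = P f - N f) ∧
      (∀ f, (∀ x, f x ≤ 1) → (P f : ℝ) ≤ M) ∧ ∀ f, (∀ x, f x ≤ 1) → (N f : ℝ) ≤ M + M := by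
  have hP : ∀ f, (∀ x, f x ≤ 1) → posPartFun ℓ f ≤ M := fun f hf => by
    refine h.posPartFun_le fun g hg => ?_
    simpa using (le_abs_self _).trans (h g 1 fun x => (hg x).trans (hf x))
  refine ⟨⟨⟨fun f => ⟨posPartFun ℓ f, h.posPartFun_nonneg f⟩, fun f g => ?_⟩, fun c f => ?_⟩,
    ⟨⟨fun f => ⟨posPartFun ℓ f - ℓ f, sub_nonneg.2 (h.le_posPartFun le_rfl)⟩, fun f g => ?_⟩,
      fun c f => ?_⟩, fun f => ?_, fun f hf => hP f hf, fun f hf => ?_⟩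
  · exact NNReal.eq (h.posPartFun_add f g)
  · exact NNReal.eq (h.posPartFun_smul c f)
  · refine NNReal.eq ?_
    change _ = posPartFun ℓ f - ℓ f + (posPartFun ℓ g - ℓ g)
    change posPartFun ℓ (f + g) - ℓ (f + g) = _
    rw [h.posPartFun_add, map_add]
    ring
  · refine NNReal.eq ?_
    change posPartFun ℓ (c • f) - ℓ (c • f) = c * (posPartFun ℓ f - ℓ f)
    rw [h.posPartFun_smul, map_smul, NNReal.smul_def, smul_eq_mul]
    ring
  · change ℓ f = posPartFun ℓ f - (posPartFun ℓ f - ℓ f)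
    ring
  · change posPartFun ℓ f - ℓ f ≤ M + M
    have := (neg_le_abs _).trans (h f 1 hf)
    simp only [NNReal.coe_one, mul_one] at this
    linarith [hP f hf]

end CompactlySupportedContinuousMap

end PositivePart

section Regularity

variable {X : Type*} [TopologicalSpace X] [T2Space X] [MeasurableSpace X] [BorelSpace X]

lemma MeasureTheory.Measure.InnerRegular.of_le {ν ρ : Measure X} [IsFiniteMeasure ρ]
    [ρ.InnerRegular] (h : ν ≤ ρ) : ν.InnerRegular := by
  refine ⟨fun A hA r hr => ?_⟩
  obtain ⟨K, hKA, hK, hlt⟩ := hA.exists_isCompact_sdiff_lt (μ := ρ) (measure_ne_top ρ A)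
    (tsub_pos_of_lt hr).ne'
  refine ⟨K, hKA, hK, ?_⟩
  by_contra! hle
  have h1 : ν A ≤ ν K + ν (A \ K) := by
    rw [measure_add_sdiff hK.measurableSet.nullMeasurableSet, Set.union_eq_right.2 hKA]
  have h2 : ν A < r + (ν A - r) :=
    h1.trans_lt (ENNReal.add_lt_add_of_le_of_lt
      (ne_top_of_le_ne_top hr.ne_top hle) hle ((h _).trans_lt hlt))
  rw [add_tsub_cancel_of_le hr.le] at h2
  exact h2.false

variable [LocallyCompactSpace X]

lemma NNRealRMK.isFiniteMeasure_rieszMeasure (Λ : C_c(X, ℝ≥0) →ₗ[ℝ≥0] ℝ≥0) {M : ℝ}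
    (h : ∀ f, (∀ x, f x ≤ 1) → (Λ f : ℝ) ≤ M) : IsFiniteMeasure (rieszMeasure Λ) := by
  refine ⟨lt_of_le_of_lt ?_ (ENNReal.ofReal_lt_top (r := M))⟩
  rw [isOpen_univ.measure_eq_iSup_isCompact]
  refine iSup₂_le fun K _ => iSup_le fun hK => ?_
  obtain ⟨f, hf1, hf2, -, hf3⟩ :=
    exists_continuousMap_one_of_isCompact_subset_isOpen hK isOpen_univ K.subset_univ
  set g : C_c(X, ℝ≥0) := CompactlySupportedContinuousMap.nnrealPart ⟨f, hf2⟩ with hg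
  have hgx : ∀ x, g x = (f x).toNNReal := fun x => rfl
  have hle : ∀ x, g x ≤ 1 := fun x => by
    rw [hgx]
    exact Real.toNNReal_le_one.2 (hf3 x).2
  calc rieszMeasure Λ K = ∫⁻ x in K, 1 ∂rieszMeasure Λ := by simp
    _ ≤ ∫⁻ x in K, g x ∂rieszMeasure Λ := by
      refine setLIntegral_mono' hK.measurableSet fun x hx => ?_
      simp [hgx, hf1 hx]
    _ ≤ ∫⁻ x, g x ∂rieszMeasure Λ := setLIntegral_le_lintegral _ _
    _ = Λ g := lintegral_rieszMeasure Λ g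
    _ ≤ ENNReal.ofReal M := by
      rw [← ENNReal.ofReal_coe_nnreal]
      exact ENNReal.ofReal_le_ofReal (h g hle)

end Regularity

section SignedIntegral

lemma svInt_zero {X : Type*} [MeasurableSpace X] (f : X → ℝ) : svInt (0 : SignedMeasure X) f = 0 := by
  simp [svInt, SignedMeasure.toJordanDecomposition_zero]

variable {X : Type*} [TopologicalSpace X] [MeasurableSpace X] [BorelSpace X]

/-- Integration of bounded continuous functions against a finite signed measure. -/
noncomputable def svIntCLM (μ : SignedMeasure X) : (X →ᵇ ℝ) →L[ℝ] ℝ :=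
  LinearMap.mkContinuous
    { toFun := fun f => svInt μ f
      map_add' := fun f g => by
        simp only [svInt, BoundedContinuousFunction.coe_add, Pi.add_apply]
        rw [integral_add (f.integrable _) (g.integrable _),
          integral_add (f.integrable _) (g.integrable _)]
        ring
      map_smul' := fun c f => by
        simp only [svInt, BoundedContinuousFunction.coe_smul, integral_smul, smul_sub,
          RingHom.id_apply] }
    (μ.toJordanDecomposition.posPart.real Set.univ + μ.toJordanDecomposition.negPart.real Set.univ)
    fun f => by
      rw [add_mul]
      exact (norm_sub_le _ _).trans
        (add_le_add (f.norm_integral_le_mul_norm _) (f.norm_integral_le_mul_norm _))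

@[simp]
lemma svIntCLM_apply (μ : SignedMeasure X) (f : X →ᵇ ℝ) : svIntCLM μ f = svInt μ f := rfl

lemma svInt_toSignedMeasure_sub (μ ν : Measure X) [IsFiniteMeasure μ] [IsFiniteMeasure ν]
    (f : X →ᵇ ℝ) :
    svInt (μ.toSignedMeasure - ν.toSignedMeasure) f = ∫ x, f x ∂μ - ∫ x, f x ∂ν := by
  have h : (μ - ν) + ν = μ + (ν - μ) := by
    rw [← Measure.toSignedMeasure_eq_toSignedMeasure_iff, Measure.toSignedMeasure_add,
      Measure.toSignedMeasure_add, ← sub_eq_sub_iff_add_eq_add]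
    exact Measure.sub_toSignedMeasure_eq_toSignedMeasure_sub.symm
  have h' := congr(∫ x, f x ∂$h)
  rw [integral_add_measure (f.integrable _) (f.integrable _),
    integral_add_measure (f.integrable _) (f.integrable _)] at h'
  rw [svInt, Measure.toJordanDecomposition_toSignedMeasure_sub,
    Measure.jordanDecompositionOfToSignedMeasureSub_posPart,
    Measure.jordanDecompositionOfToSignedMeasureSub_negPart]
  linarith

/-- A continuous function vanishing at infinity is a uniform limit of differences of nonnegative
compactly supported functions. -/
lemma ZeroAtInftyContinuousMap.exists_compactlySupported_sub_near {X : Type*} [TopologicalSpace X]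
    [R1Space X] (g : C₀(X, ℝ)) {ε : ℝ} (hε : 0 < ε) :
    ∃ f₁ f₂ : C_c(X, ℝ≥0), ∀ x, |(f₁ x - f₂ x : ℝ) - g x| ≤ ε := by
  have key : ∀ g : C₀(X, ℝ), ∃ f : C_c(X, ℝ≥0), ∀ x, f x = (g x - ε).toNNReal := fun g => by
    have hev : ∀ᶠ x in cocompact X, g x < ε := (zero_at_infty g).eventually_lt_const hε
    obtain ⟨K, hK, hKs⟩ := mem_cocompact.1 hev
    refine ⟨⟨⟨fun x => (g x - ε).toNNReal, by fun_prop⟩, ?_⟩, fun x => rfl⟩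
    refine HasCompactSupport.intro hK fun x hx => ?_
    have : g x < ε := hKs hx
    simpa using this.le
  obtain ⟨f₁, h₁⟩ := key g
  obtain ⟨f₂, h₂⟩ := key (-g)
  refine ⟨f₁, f₂, fun x => ?_⟩
  rw [h₁, h₂, Real.coe_toNNReal', Real.coe_toNNReal', ZeroAtInftyContinuousMap.neg_apply, abs_le]
  rcases max_cases (g x - ε) 0 with h | h <;> rcases max_cases (-g x - ε) 0 with h' | h' <;>
    constructor <;> linarith

variable [T2Space X] [LocallyCompactSpace X]

/-- **Riesz representation theorem**: every continuous functional on `C₀(X, ℝ)` is integration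
against a finite signed Radon measure. -/
theorem exists_signedMeasure_svInt_eq (L : C₀(X, ℝ) →L[ℝ] ℝ) :
    ∃ μ : SignedMeasure X, μ.totalVariation.InnerRegular ∧ ∀ g : C₀(X, ℝ), svInt μ g = L g := by
  let ι : C_c(X, ℝ≥0) → C₀(X, ℝ) := fun f =>
    ⟨⟨fun x => (f x : ℝ), by fun_prop⟩,
      (zero_at_infty f.toReal).congr fun x => f.toReal_apply x⟩
  let ℓ : C_c(X, ℝ≥0) →ₗ[ℝ≥0] ℝ :=
    { toFun := fun f => L (ι f)
      map_add' := fun f g => by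
        rw [← map_add]
        congr 1
      map_smul' := fun c f => by
        rw [RingHom.id_apply, NNReal.smul_def, ← map_smul]
        congr 1 }
  have hnorm : ∀ (g : C₀(X, ℝ)) (c : ℝ), 0 ≤ c → (∀ x, |g x| ≤ c) → ‖g‖ ≤ c := fun g c hc h => by
    rw [← ZeroAtInftyContinuousMap.norm_toBCF_eq_norm]
    exact (BoundedContinuousFunction.norm_le hc).2 h
  have hℓ : CompactlySupportedContinuousMap.IsBoundedBy ℓ ‖L‖ := fun f c hc => by
    refine (L.le_opNorm (ι f)).trans ?_
    gcongr
    refine hnorm _ _ c.2 fun x => ?_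
    change |(f x : ℝ)| ≤ c
    simpa using hc x
  obtain ⟨P, N, hPN, hP, hN⟩ := hℓ.exists_eq_sub
  have := NNRealRMK.isFiniteMeasure_rieszMeasure P hP
  have := NNRealRMK.isFiniteMeasure_rieszMeasure N hN
  set μ := NNRealRMK.rieszMeasure P
  set ν := NNRealRMK.rieszMeasure N
  refine ⟨μ.toSignedMeasure - ν.toSignedMeasure, ?_, ?_⟩
  · refine Measure.InnerRegular.of_le (ρ := μ + ν) ?_
    rw [SignedMeasure.totalVariation, Measure.toJordanDecomposition_toSignedMeasure_sub,
      Measure.jordanDecompositionOfToSignedMeasureSub_posPart,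
      Measure.jordanDecompositionOfToSignedMeasureSub_negPart]
    exact add_le_add Measure.sub_le Measure.sub_le
  · have hι : ∀ f, svIntCLM (μ.toSignedMeasure - ν.toSignedMeasure) (ι f).toBCF = L (ι f) :=
      fun f => by
        rw [svIntCLM_apply, svInt_toSignedMeasure_sub]
        exact (congrArg₂ (· - ·) (NNRealRMK.integral_rieszMeasure P f)
          (NNRealRMK.integral_rieszMeasure N f)).trans (hPN f).symm
    intro g
    have hclosed : IsClosed {g : C₀(X, ℝ) |
        svIntCLM (μ.toSignedMeasure - ν.toSignedMeasure) g.toBCF = L g} :=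
      isClosed_eq ((svIntCLM _).continuous.comp
        ZeroAtInftyContinuousMap.isometry_toBCF.continuous) L.continuous
    suffices g ∈ closure {g : C₀(X, ℝ) |
        svIntCLM (μ.toSignedMeasure - ν.toSignedMeasure) g.toBCF = L g} from
      hclosed.closure_subset this
    refine Metric.mem_closure_iff.2 fun ε hε => ?_
    obtain ⟨f₁, f₂, hf⟩ := g.exists_compactlySupported_sub_near (half_pos hε)
    refine ⟨ι f₁ - ι f₂, ?_, ?_⟩
    · have : (ι f₁ - ι f₂).toBCF = (ι f₁).toBCF - (ι f₂).toBCF := rfl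
      change _ = _
      rw [this, map_sub, map_sub, hι, hι]
    · rw [dist_comm, dist_eq_norm]
      exact (hnorm _ _ (half_pos hε).le hf).trans_lt (half_lt_self hε)

/-- A finite signed Radon measure annihilating `C₀(X, ℝ)` is zero. -/
theorem eq_zero_of_forall_svInt_eq_zero {μ : SignedMeasure X} (hμ : μ.totalVariation.InnerRegular)
    (h : ∀ g : C₀(X, ℝ), svInt μ g = 0) : μ = 0 := by
  have hp : μ.toJordanDecomposition.posPart.InnerRegular :=
    .of_le (ρ := μ.totalVariation) (Measure.le_add_right le_rfl)
  have hn : μ.toJordanDecomposition.negPart.InnerRegular :=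
    .of_le (ρ := μ.totalVariation) (Measure.le_add_left le_rfl)
  have heq : μ.toJordanDecomposition.posPart = μ.toJordanDecomposition.negPart :=
    Measure.ext_of_integral_eq_on_compactlySupported fun f =>
      sub_eq_zero.1 (h ⟨f.toContinuousMap, zero_at_infty f⟩)
  rw [← μ.toSignedMeasure_toJordanDecomposition, JordanDecomposition.toSignedMeasure]
  simp only [heq, sub_self]

end SignedIntegral

lemma eq_zero_of_forall_abs_le_mul {a M : ℝ} (h : ∀ ε : ℝ, 0 < ε → |a| ≤ M * ε) : a = 0 := by
  have hlim : Tendsto (fun ε : ℝ => M * ε) (𝓝[>] 0) (𝓝 0) := by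
    have : Tendsto (fun ε : ℝ => M * ε) (𝓝 0) (𝓝 (M * 0)) := tendsto_id.const_mul M
    rw [mul_zero] at this
    exact this.mono_left nhdsWithin_le_nhds
  exact abs_nonpos_iff.1 (ge_of_tendsto hlim (eventually_nhdsWithin_of_forall h))

/-- Hahn-Banach: a point outside a closed subspace is separated from it by a functional vanishing
on the subspace. -/
lemma Submodule.exists_clm_ne_zero_of_notMem {E : Type*} [NormedAddCommGroup E] [NormedSpace ℝ E]
    (V : Submodule ℝ E) (hV : IsClosed (V : Set E)) {x : E} (hx : x ∉ V) :
    ∃ L : E →L[ℝ] ℝ, L x ≠ 0 ∧ ∀ v ∈ V, L v = 0 := by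
  obtain ⟨L, u, hxu, hu⟩ := geometric_hahn_banach_point_closed V.convex hV hx
  have hu0 : u < 0 := by simpa using hu 0 V.zero_mem
  refine ⟨L, (hxu.trans hu0).ne, fun v hv => ?_⟩
  by_contra hne
  have := hu ((u / L v) • v) (V.smul_mem _ hv)
  rw [map_smul, smul_eq_mul, div_mul_cancel₀ _ hne] at this
  exact this.false

/-- The feature map of a kernel with continuous sections and continuous diagonal is continuous. -/
lemma continuous_of_continuous_inner {X H : Type*} [TopologicalSpace X] [NormedAddCommGroup H]
    [InnerProductSpace ℝ H] {Φ : X → H} (hsec : ∀ x, Continuous fun y => ⟪Φ y, Φ x⟫)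
    (hdiag : Continuous fun x => ⟪Φ x, Φ x⟫) : Continuous Φ := by
  refine continuous_iff_continuousAt.2 fun x => tendsto_iff_norm_sub_tendsto_zero.2 ?_
  have h : Continuous fun y => √(⟪Φ y, Φ y⟫ - 2 * ⟪Φ y, Φ x⟫ + ⟪Φ x, Φ x⟫) := by
    have := hsec x
    fun_prop
  have h' := h.tendsto x
  have e : ∀ y, √(⟪Φ y, Φ y⟫ - 2 * ⟪Φ y, Φ x⟫ + ⟪Φ x, Φ x⟫) = ‖Φ y - Φ x‖ := fun y => by
    rw [real_inner_self_eq_norm_sq, real_inner_self_eq_norm_sq, ← norm_sub_sq_real,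
      Real.sqrt_sq (norm_nonneg _)]
  simpa only [e, sub_self, norm_zero] using h'

/-- Let `X` be a locally compact Hausdorff space and let
`k(x,y) = ∑_{j∈I} φ_j(x) φ_j(y)` be a bounded symmetric positive definite kernel, where
`I` is countable, each `φ_j` is continuous, the series converges uniformly on `X × X`,
and `k(·,x) ∈ C₀(X)` for all `x`; let `H` be the RKHS of `k`.  Then `k` is c₀-universal
iff for every nonzero finite signed Radon measure `μ` on `X` there is some `j ∈ I` with
`∫ φ_j dμ ≠ 0`. -/
theorem stmt11
    {X : Type*} [TopologicalSpace X] [T2Space X] [LocallyCompactSpace X]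
    [MeasurableSpace X] [BorelSpace X]
    {I : Type*} [Countable I]
    (φ : I → X → ℝ) (hφcont : ∀ j, Continuous (φ j))
    (k : X → X → ℝ)
    (hkφ : ∀ ε : ℝ, 0 < ε → ∃ s : Finset I, ∀ t : Finset I, s ⊆ t →
      ∀ x y : X, |(∑ j ∈ t, φ j x * φ j y) - k x y| ≤ ε)
    (hkbdd : ∃ C : ℝ, ∀ x y : X, |k x y| ≤ C)
    (hkC0 : ∀ x : X, Continuous (fun y => k y x) ∧
      Tendsto (fun y => k y x) (cocompact X) (𝓝 0))
    {H : Type*} [NormedAddCommGroup H] [InnerProductSpace ℝ H] [CompleteSpace H]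
    (T : H →ₗ[ℝ] (X → ℝ)) (hT : Function.Injective T)
    (Φ : X → H)
    (hk : ∀ x y : X, k x y = ⟪Φ x, Φ y⟫)
    (hrepro : ∀ (f : H) (x : X), T f x = ⟪f, Φ x⟫) :
    (∀ (g : C₀(X, ℝ)) (ε : ℝ), 0 < ε → ∃ f : H, ∀ x : X, |T f x - g x| ≤ ε) ↔
      ∀ μ : MeasureTheory.SignedMeasure X, μ.totalVariation.InnerRegular → μ ≠ 0 →
        ∃ j : I, svInt μ (φ j) ≠ 0 := by
  obtain ⟨C, hC⟩ := hkbdd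
  have hΦC : ∀ x, ‖Φ x‖ ≤ √C := fun x => by
    refine Real.le_sqrt_of_sq_le ?_
    rw [← real_inner_self_eq_norm_sq, ← hk]
    exact (le_abs_self _).trans (hC x x)
  have hφC : ∀ j x, ‖φ j x‖ ≤ √(C + 1) := fun j x => by
    obtain ⟨s, hs⟩ := hkφ 1 one_pos
    classical
    refine Real.le_sqrt_of_sq_le ?_
    have h1 := (abs_le.1 (hs (insert j s) (Finset.subset_insert _ _) x x)).2
    have h2 : φ j x * φ j x ≤ ∑ i ∈ insert j s, φ i x * φ i x :=
      Finset.single_le_sum (f := fun i => φ i x * φ i x) (fun i _ => mul_self_nonneg _)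
        (Finset.mem_insert_self _ _)
    rw [Real.norm_eq_abs, sq_abs, sq]
    linarith [(le_abs_self _).trans (hC x x)]
  let φB : I → X →ᵇ ℝ := fun j => .ofNormedAddCommGroup (φ j) (hφcont j) _ (hφC j)
  have hΦcont : Continuous Φ := by
    refine continuous_of_continuous_inner (fun x => ?_) ?_
    · simpa only [hk] using (hkC0 x).1
    · have hunif : TendstoUniformly (fun (t : Finset I) x => ∑ j ∈ t, φ j x * φ j x)
          (fun x => ⟪Φ x, Φ x⟫) atTop := by
        refine Metric.tendstoUniformly_iff.2 fun ε hε => ?_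
        obtain ⟨s, hs⟩ := hkφ (ε / 2) (half_pos hε)
        filter_upwards [eventually_ge_atTop s] with t ht x
        rw [dist_comm, Real.dist_eq, ← hk]
        exact (hs t ht x x).trans_lt (half_lt_self hε)
      exact hunif.continuous (Frequently.of_forall fun t => by fun_prop)
  have hTbound : ∀ f x, ‖T f x‖ ≤ √C * ‖f‖ := fun f x => by
    rw [hrepro, mul_comm]
    exact (norm_inner_le_norm f (Φ x)).trans (by gcongr; exact hΦC x)
  let TB : H →L[ℝ] (X →ᵇ ℝ) := LinearMap.mkContinuous
    { toFun := fun f => .ofNormedAddCommGroup (T f)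
        (by simp only [funext (hrepro f)]; fun_prop) _ (hTbound f)
      map_add' := fun f g => by ext x; simp
      map_smul' := fun c f => by ext x; simp }
    √C fun f => BoundedContinuousFunction.norm_ofNormedAddCommGroup_le _ (by positivity) (hTbound f)
  have hTB : ∀ f x, TB f x = T f x := fun f x => rfl
  have hTΦ : ∀ x y, TB (Φ x) y = k x y := fun x y => by rw [hTB, hrepro, hk]
  have htop : ∀ W : Submodule ℝ H, IsClosed (W : Set H) → (∀ x, Φ x ∈ W) → ∀ f, f ∈ W :=
    fun W hW hWΦ f => by
      have : W = ⊤ := by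
        rw [← hW.submodule_topologicalClosure_eq, Submodule.topologicalClosure_eq_top_iff,
          Submodule.eq_bot_iff]
        intro f hf
        refine hT (funext fun x => ?_)
        rw [hrepro, map_zero, real_inner_comm]
        exact hf _ (hWΦ x)
      simp [this]
  have hTC0 : ∀ f, ∃ g : C₀(X, ℝ), g.toBCF = TB f := by
    let W : Submodule ℝ H :=
      { carrier := TB ⁻¹' Set.range ZeroAtInftyContinuousMap.toBCF
        add_mem' := by
          rintro f₁ f₂ ⟨g₁, h₁⟩ ⟨g₂, h₂⟩
          exact ⟨g₁ + g₂, by rw [map_add, ← h₁, ← h₂]; rfl⟩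
        zero_mem' := ⟨0, by rw [map_zero]; rfl⟩
        smul_mem' := by
          rintro c f ⟨g, h⟩
          exact ⟨c • g, by rw [map_smul, ← h]; rfl⟩ }
    refine htop W (ZeroAtInftyContinuousMap.isClosed_range_toBCF.preimage TB.continuous) fun x => ?_
    refine ⟨⟨⟨fun y => k y x, (hkC0 x).1⟩, (hkC0 x).2⟩, ?_⟩
    ext y
    rw [hTΦ, hk x y, real_inner_comm, ← hk]
    rfl
  have hpartial : ∀ μ : SignedMeasure X, ∀ ε : ℝ, 0 < ε → ∃ s : Finset I, ∀ t, s ⊆ t → ∀ x,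
      |(∑ j ∈ t, svInt μ (φ j) * φ j x) - svIntCLM μ (TB (Φ x))| ≤ ‖svIntCLM μ‖ * ε := by
    intro μ ε hε
    obtain ⟨s, hs⟩ := hkφ ε hε
    refine ⟨s, fun t ht x => ?_⟩
    have h1 : ‖(∑ j ∈ t, φ j x • φB j) - TB (Φ x)‖ ≤ ε := by
      refine (BoundedContinuousFunction.norm_le hε.le).2 fun y => ?_
      simpa [hTΦ, φB] using hs t ht x y
    have h2 := (svIntCLM μ).le_opNorm_of_le h1
    rw [map_sub, map_sum] at h2
    simp only [map_smul, smul_eq_mul, mul_comm (φ _ x)] at h2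
    exact h2
  constructor
  · intro hdense μ hμ
    contrapose!
    intro hzero
    have hk0 : ∀ x, svIntCLM μ (TB (Φ x)) = 0 := fun x => by
      have : ∀ ε : ℝ, 0 < ε → |svIntCLM μ (TB (Φ x))| ≤ ‖svIntCLM μ‖ * ε := fun ε hε => by
        obtain ⟨s, hs⟩ := hpartial μ ε hε
        simpa [hzero] using hs s subset_rfl x
      exact eq_zero_of_forall_abs_le_mul this
    have hT0 : ∀ f, svIntCLM μ (TB f) = 0 := fun f =>
      htop ((svIntCLM μ).comp TB).ker ((svIntCLM μ).comp TB).isClosed_ker hk0 f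
    refine eq_zero_of_forall_svInt_eq_zero hμ fun g => ?_
    change svIntCLM μ g.toBCF = 0
    refine eq_zero_of_forall_abs_le_mul (M := ‖svIntCLM μ‖) fun ε hε => ?_
    obtain ⟨f, hf⟩ := hdense g ε hε
    have h1 : ‖TB f - g.toBCF‖ ≤ ε := (BoundedContinuousFunction.norm_le hε.le).2 hf
    have h2 := (svIntCLM μ).le_opNorm_of_le h1
    rwa [map_sub, hT0, zero_sub, norm_neg] at h2
  · intro hμ
    by_contra! hnot
    obtain ⟨g, ε, hε, hg⟩ := hnot
    let V : Submodule ℝ C₀(X, ℝ) :=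
      { carrier := {g | ∃ f, g.toBCF = TB f}
        add_mem' := by
          rintro g₁ g₂ ⟨f₁, h₁⟩ ⟨f₂, h₂⟩
          exact ⟨f₁ + f₂, by rw [map_add, ← h₁, ← h₂]; rfl⟩
        zero_mem' := ⟨0, by rw [map_zero]; rfl⟩
        smul_mem' := by
          rintro c g ⟨f, h⟩
          exact ⟨c • f, by rw [map_smul, ← h]; rfl⟩ }
    have hgV : g ∉ V.topologicalClosure := fun hmem => by
      obtain ⟨g', ⟨f, hf⟩, hlt⟩ := Metric.mem_closure_iff.1 hmem ε hε
      obtain ⟨x, hx⟩ := hg f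
      refine absurd hx (not_lt.2 ?_)
      rw [← hTB, ← hf, ← Real.dist_eq, dist_comm]
      exact (BoundedContinuousFunction.dist_coe_le_dist (f := g.toBCF) (g := g'.toBCF) x).trans
        hlt.le
    obtain ⟨L, hLg, hLV⟩ :=
      V.topologicalClosure.exists_clm_ne_zero_of_notMem V.isClosed_topologicalClosure hgV
    obtain ⟨μ, hreg, hμL⟩ := exists_signedMeasure_svInt_eq L
    have hμ0 : μ ≠ 0 := by
      rintro rfl
      exact hLg (by rw [← hμL, svInt_zero])
    obtain ⟨j, hj⟩ := hμ μ hreg hμ0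
    have hk0 : ∀ x, svIntCLM μ (TB (Φ x)) = 0 := fun x => by
      obtain ⟨g', hg'⟩ := hTC0 (Φ x)
      rw [← hg']
      exact (hμL g').trans (hLV g' (V.le_topologicalClosure ⟨_, hg'⟩))
    refine hj (mul_self_eq_zero.1 (eq_zero_of_forall_abs_le_mul
      (M := ‖svIntCLM μ‖ * ‖svIntCLM μ‖) fun ε hε => ?_))
    obtain ⟨s, hs⟩ := hpartial μ ε hε
    classical
    have h1 : ‖∑ i ∈ insert j s, svInt μ (φ i) • φB i‖ ≤ ‖svIntCLM μ‖ * ε := by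
      refine (BoundedContinuousFunction.norm_le (by positivity)).2 fun x => ?_
      simpa [hk0, φB] using hs (insert j s) (Finset.subset_insert _ _) x
    have h2 := (le_abs_self _).trans ((svIntCLM μ).le_opNorm_of_le h1)
    rw [map_sum] at h2
    have h3 : svInt μ (φ j) * svInt μ (φ j) ≤
        ∑ i ∈ insert j s, svIntCLM μ (svInt μ (φ i) • φB i) := by
      simp only [map_smul, smul_eq_mul]
      exact Finset.single_le_sum (f := fun i => svInt μ (φ i) * svInt μ (φ i))
        (fun i _ => mul_self_nonneg _) (Finset.mem_insert_self _ _)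
    rw [abs_mul_self, mul_assoc]
    exact h3.trans h2
end

section
/- Let r ∈ (0,∞], let X := {x ∈ ℝ^d : ‖x‖₂ < √r}, and let f(t) = ∑_{n=0}^∞ a_n t^n for t ∈ (−r, r). If a_n > 0 for all n ≥ 0, then the kernel k(x,y) = f(xᵀy), x, y ∈ X, is c-universal on every compact subset of X, i.e., for every compact Z ⊆ X the restriction of the RKHS of k to Z is dense in C(Z) with respect to the uniform norm. -/
open MeasureTheory Filter Topology RealInnerProductSpace
open scoped ENNReal

/-- If a power series with vector coefficients takes values in a closed subspace near `0`, then all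
its coefficients lie in that subspace. -/
theorem Submodule.coeff_mem_of_eventually_hasSum_pow_smul {E : Type*} [NormedAddCommGroup E]
    [NormedSpace ℝ E] (A : Submodule ℝ E) (hA : IsClosed (A : Set E)) (v : ℕ → E)
    (hv : ∀ᶠ t in 𝓝 (0 : ℝ), ∃ u ∈ A, HasSum (fun n => t ^ n • v n) u) (n : ℕ) : v n ∈ A := by
  have : IsClosed (A : Set E) := hA
  let p : FormalMultilinearSeries ℝ ℝ (E ⧸ A) := fun n =>
    ContinuousMultilinearMap.mkPiRing ℝ (Fin n) (A.mkQL (v n))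
  have hcoeff : ∀ n, p.coeff n = A.mkQL (v n) := fun n => by
    simp [p, FormalMultilinearSeries.coeff]
  have hp : HasFPowerSeriesAt (fun _ : ℝ => (0 : E ⧸ A)) p 0 := by
    rw [hasFPowerSeriesAt_iff]
    filter_upwards [hv] with t ⟨u, hu, hsum⟩
    have h := hsum.mapL A.mkQL
    have hu0 : A.mkQL u = 0 := by simpa using hu
    rw [hu0] at h
    simpa [hcoeff] using h
  have h0 : A.mkQL (v n) = 0 := by
    rw [← hcoeff n, hp.eq_zero]
    simp [FormalMultilinearSeries.coeff]
  simpa using h0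

/-- The linear functional `⟪y, ·⟫` pulled back along a continuous map into an inner product space. -/
noncomputable def innerContinuousMap {E Y : Type*} [NormedAddCommGroup E] [InnerProductSpace ℝ E]
    [TopologicalSpace Y] (i : C(Y, E)) (y : E) : C(Y, ℝ) where
  toFun x := ⟪y, i x⟫
  continuous_toFun := by fun_prop

/-- A closed subspace of `C(Y, ℝ)` which contains all powers of the linear functionals pulled back
along an injective map into an inner product space is everything. -/
theorem Submodule.eq_top_of_innerContinuousMap_pow_mem {E Y : Type*} [NormedAddCommGroup E]
    [InnerProductSpace ℝ E] [TopologicalSpace Y] [CompactSpace Y] (i : C(Y, E))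
    (hi : Function.Injective i) (A : Submodule ℝ C(Y, ℝ)) (hA : IsClosed (A : Set C(Y, ℝ)))
    (hpow : ∀ y n, innerContinuousMap i y ^ n ∈ A) : A = ⊤ := by
  let e : E → C(Y, ℝ) := fun y => NormedSpace.exp (innerContinuousMap i y)
  have he_mem : ∀ y, e y ∈ A := fun y =>
    hA.mem_of_tendsto (NormedSpace.exp_series_hasSum_exp' (𝕂 := ℝ) (innerContinuousMap i y))
      (Eventually.of_forall fun s => A.sum_mem fun n _ => A.smul_mem _ (hpow y n))
  have he_apply : ∀ y x, e y x = Real.exp ⟪y, i x⟫ := fun y x => by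
    have h := NormedSpace.map_exp (ContinuousMap.evalAlgHom ℝ ℝ x)
      (continuous_eval_const x) (innerContinuousMap i y)
    rw [Real.exp_eq_exp_ℝ]
    exact h
  let M : Submonoid C(Y, ℝ) :=
    { carrier := Set.range e
      one_mem' := ⟨0, by ext x; simp [he_apply]⟩
      mul_mem' := by
        rintro _ _ ⟨y, rfl⟩ ⟨z, rfl⟩
        exact ⟨y + z, by ext x; simp [he_apply, inner_add_left, Real.exp_add]⟩ }
  have hle : Subalgebra.toSubmodule (Algebra.adjoin ℝ (M : Set C(Y, ℝ))) ≤ A := by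
    rw [Algebra.adjoin_eq_span, Submonoid.closure_eq, Submodule.span_le]
    rintro _ ⟨y, rfl⟩
    exact he_mem y
  have hsep : (Algebra.adjoin ℝ (M : Set C(Y, ℝ))).SeparatesPoints := by
    intro x z hxz
    refine ⟨_, ⟨e (i x - i z), Algebra.subset_adjoin ⟨_, rfl⟩, rfl⟩, fun h => hxz (hi ?_)⟩
    beta_reduce at h
    rw [he_apply, he_apply, Real.exp_eq_exp, ← sub_eq_zero, ← inner_sub_right,
      inner_self_eq_zero, sub_eq_zero] at h
    exact h
  have htop := ContinuousMap.subalgebra_topologicalClosure_eq_top_of_separatesPoints _ hsep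
  rw [eq_top_iff]
  intro g _
  have hg : g ∈ (Algebra.adjoin ℝ (M : Set C(Y, ℝ))).topologicalClosure := htop ▸ trivial
  exact closure_minimal (s := (Algebra.adjoin ℝ (M : Set C(Y, ℝ)) : Set C(Y, ℝ))) hle hA hg

/-- Let `r ∈ (0,∞]`, `X := {x ∈ ℝᵈ : ‖x‖ < √r}` and
`f(t) = ∑_{n=0}^∞ aₙ tⁿ` for `t ∈ (−r,r)`.  If `aₙ > 0` for all `n`, then the Taylor
kernel `k(x,y) = f(xᵀy)` on `X` (with RKHS `H`) is c-universal on every compact subset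
`Z ⊆ X`, i.e. the restriction of `H` to `Z` is uniformly dense in `C(Z)`. -/
theorem stmt12 {d : ℕ} (r : ℝ≥0∞) (hr : 0 < r)
    (a : ℕ → ℝ) (ha : ∀ n, 0 < a n)
    (f : ℝ → ℝ)
    (hf : ∀ t : ℝ, ENNReal.ofReal |t| < r → HasSum (fun n => a n * t ^ n) (f t))
    (k : {x : EuclideanSpace ℝ (Fin d) // ENNReal.ofReal (‖x‖ ^ 2) < r} →
         {x : EuclideanSpace ℝ (Fin d) // ENNReal.ofReal (‖x‖ ^ 2) < r} → ℝ)
    (hkf : ∀ x y, k x y = f ⟪(x : EuclideanSpace ℝ (Fin d)), (y : EuclideanSpace ℝ (Fin d))⟫)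
    {H : Type*} [NormedAddCommGroup H] [InnerProductSpace ℝ H] [CompleteSpace H]
    (T : H →ₗ[ℝ] ({x : EuclideanSpace ℝ (Fin d) // ENNReal.ofReal (‖x‖ ^ 2) < r} → ℝ))
    (hT : Function.Injective T)
    (Φ : {x : EuclideanSpace ℝ (Fin d) // ENNReal.ofReal (‖x‖ ^ 2) < r} → H)
    (hk : ∀ x y, k x y = ⟪Φ x, Φ y⟫)
    (hrepro : ∀ (g : H) x, T g x = ⟪g, Φ x⟫) :
    ∀ (Z : Set {x : EuclideanSpace ℝ (Fin d) // ENNReal.ofReal (‖x‖ ^ 2) < r}),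
      IsCompact Z → ∀ (g : C(Z, ℝ)) (ε : ℝ), 0 < ε →
        ∃ fH : H, ∀ x : Z, |T fH (x : {x : EuclideanSpace ℝ (Fin d) // ENNReal.ofReal (‖x‖ ^ 2) < r}) - g x| ≤ ε := by
  intro Z hZ g ε hε
  have : CompactSpace Z := isCompact_iff_compactSpace.mp hZ
  let i : C(Z, EuclideanSpace ℝ (Fin d)) := ⟨fun x => x.1.1, by fun_prop⟩
  have hi : Function.Injective i := Subtype.val_injective.comp Subtype.val_injective
  let A₀ : Submodule ℝ C(Z, ℝ) :=
    (LinearMap.range ((LinearMap.funLeft ℝ ℝ (Subtype.val : Z → _)).comp T)).comap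
      (ContinuousMap.coeFnLinearMap ℝ)
  have hpow : ∀ y n, innerContinuousMap i y ^ n ∈ A₀.topologicalClosure := by
    intro y n
    obtain ⟨s, hs0, hsr⟩ : ∃ s : ℝ, 0 < s ∧ ENNReal.ofReal s < r := by
      obtain ⟨s, hs0, hsr⟩ := ENNReal.lt_iff_exists_nnreal_btwn.mp hr
      exact ⟨s, by exact_mod_cast hs0, by simpa using hsr⟩
    have hlt : ∀ t ≤ s, ENNReal.ofReal t < r := fun t ht =>
      (ENNReal.ofReal_le_ofReal ht).trans_lt hsr
    have hev₁ : ∀ᶠ t in 𝓝 (0 : ℝ), ‖t • innerContinuousMap i y‖ < s :=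
      ContinuousAt.eventually_lt (by fun_prop) continuousAt_const (by simpa using hs0)
    have hev₂ : ∀ᶠ t in 𝓝 (0 : ℝ), ‖t • y‖ ^ 2 < s :=
      ContinuousAt.eventually_lt (by fun_prop) continuousAt_const (by simpa using hs0)
    have hmem := A₀.topologicalClosure.coeff_mem_of_eventually_hasSum_pow_smul
      A₀.isClosed_topologicalClosure (fun n => a n • innerContinuousMap i y ^ n) (by
        filter_upwards [hev₁, hev₂] with t ht₁ ht₂
        have hsummable : Summable fun n => t ^ n • a n • innerContinuousMap i y ^ n := by
          refine .of_norm_bounded (hf ‖t • innerContinuousMap i y‖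
            (hlt _ (by simpa only [abs_norm] using ht₁.le))).summable fun m => ?_
          rw [smul_comm, ← smul_pow, norm_smul, Real.norm_of_nonneg (ha m).le]
          gcongr
          · exact (ha m).le
          · refine (ContinuousMap.norm_le _ (by positivity)).mpr fun x => ?_
            rw [ContinuousMap.pow_apply, norm_pow]
            gcongr
            exact ContinuousMap.norm_coe_le_norm _ x
        refine ⟨_, A₀.le_topologicalClosure ⟨Φ ⟨t • y, hlt _ ht₂.le⟩, ?_⟩, hsummable.hasSum⟩
        ext x
        have h₁ := hsummable.hasSum.mapL (ContinuousMap.evalCLM ℝ x)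
        have h₂ := hf ⟪t • y, i x⟫ (hlt _ (by
          have h := (t • innerContinuousMap i y).norm_coe_le_norm x
          rw [inner_smul_left]
          exact h.trans ht₁.le))
        refine (hrepro _ _).trans ((hk _ _).symm.trans ((hkf _ _).trans (h₂.unique ?_)))
        convert h₁ using 2 with m
        on_goal 2 => rfl
        simp [innerContinuousMap, inner_smul_left]
        ring) n
    exact (Submodule.smul_mem_iff _ (ha n).ne').mp hmem
  have hg : g ∈ A₀.topologicalClosure := by
    rw [Submodule.eq_top_of_innerContinuousMap_pow_mem i hi _ A₀.isClosed_topologicalClosure hpow]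
    trivial
  obtain ⟨u, ⟨h, hu⟩, hdist⟩ := Metric.mem_closure_iff.mp hg ε hε
  refine ⟨h, fun x => ?_⟩
  have hx : T h x = u x := congrFun hu x
  rw [hx, ← Real.dist_eq, dist_comm]
  exact (ContinuousMap.dist_apply_le_dist x).trans hdist.le
end

section
/- Let ψ : ℝ^d → ℝ be a nonzero bounded continuous positive definite function with ψ ∈ C_0(ℝ^d) and let k(x,y) = ψ(x − y). Then k is c0-universal if and only if k is characteristic to the set of all Borel probability measures on ℝ^d. -/
open MeasureTheory Filter Topology RealInnerProductSpace
open scoped ZeroAtInfty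
open scoped CompactlySupported

namespace ZeroAtInftyContinuousMap

variable {X : Type*} [TopologicalSpace X]

/-- Compactly supported functions are uniformly dense in `C₀(X, ℝ)`. -/
theorem exists_compactlySupported_abs_sub_le (f : C₀(X, ℝ)) {ε : ℝ} (hε : 0 < ε) :
    ∃ g : C_c(X, ℝ), ∀ x, |f x - g x| ≤ ε := by
  have hf : ∀ᶠ x in cocompact X, |f x| < ε := by
    have := (zero_at_infty f).eventually (Metric.ball_mem_nhds 0 hε)
    simpa using this
  obtain ⟨K, hK, hKf⟩ := mem_cocompact.mp hf
  have hclosed : IsClosed {x | ε ≤ |f x|} :=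
    isClosed_le continuous_const (map_continuous f).abs
  have hcomp : IsCompact {x | ε ≤ |f x|} := hK.of_isClosed_subset hclosed fun x hx ↦ by
    by_contra hxK
    exact not_le.mpr (show |f x| < ε from hKf hxK) (show ε ≤ |f x| from hx)
  refine ⟨⟨⟨fun x ↦ f x - max (-ε) (min (f x) ε), by fun_prop⟩,
    HasCompactSupport.intro' hcomp hclosed fun x hx ↦ ?_⟩, fun x ↦ ?_⟩
  · have hx' : |f x| < ε := not_le.mp hx
    obtain ⟨h₁, h₂⟩ := abs_lt.mp hx'
    simp [min_eq_left h₂.le, max_eq_right h₁.le]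
  · change |f x - (f x - max (-ε) (min (f x) ε))| ≤ ε
    rw [sub_sub_cancel, abs_le]
    exact ⟨le_max_left _ _, max_le (by linarith) (min_le_right _ _)⟩

theorem abs_apply_le_norm (f : C₀(X, ℝ)) (x : X) : |f x| ≤ ‖f‖ :=
  f.toBCF.norm_coe_le_norm x

theorem norm_le_of_forall_abs_le (f : C₀(X, ℝ)) {C : ℝ} (hC : 0 ≤ C) (h : ∀ x, |f x| ≤ C) :
    ‖f‖ ≤ C :=
  (BoundedContinuousFunction.norm_le hC).mpr h

/-- Every bounded linear functional on `C₀(X, ℝ)` is a difference of two bounded positive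
functionals. -/
theorem exists_positive_sub_eq (L : C₀(X, ℝ) →L[ℝ] ℝ) :
    ∃ A B : C₀(X, ℝ) →ₗ[ℝ] ℝ,
      (∀ f : C₀(X, ℝ), (∀ x, 0 ≤ f x) → 0 ≤ A f) ∧ (∀ f : C₀(X, ℝ), (∀ x, 0 ≤ f x) → 0 ≤ B f) ∧
      (∀ f, A f ≤ ‖L‖ * ‖f‖) ∧ (∀ f, B f ≤ ‖L‖ * ‖f‖) ∧ ∀ f, L f = A f - B f := by
  let N : C₀(X, ℝ) × C₀(X, ℝ) → ℝ := fun p ↦ ‖L‖ * ‖p.1.toBCF ⊔ p.2.toBCF ⊔ 0‖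
  have hN_le (p : C₀(X, ℝ) × C₀(X, ℝ)) {C : ℝ} (hC : 0 ≤ C)
      (h : ∀ x, max (p.1 x) (p.2 x) ≤ C) : N p ≤ ‖L‖ * C := by
    refine mul_le_mul_of_nonneg_left ((BoundedContinuousFunction.norm_le hC).mpr fun x ↦ ?_)
      (norm_nonneg L)
    change |max (max (p.1 x) (p.2 x)) 0| ≤ C
    rw [abs_of_nonneg (le_max_right _ _)]
    exact max_le (h x) hC
  have le_hN (p : C₀(X, ℝ) × C₀(X, ℝ)) (x : X) :
      max (p.1 x) (p.2 x) ≤ ‖p.1.toBCF ⊔ p.2.toBCF ⊔ 0‖ :=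
    (le_max_left _ _).trans ((le_abs_self _).trans
      ((p.1.toBCF ⊔ p.2.toBCF ⊔ 0).norm_coe_le_norm x))
  let D : C₀(X, ℝ) →ₗ[ℝ] C₀(X, ℝ) × C₀(X, ℝ) := LinearMap.id.prod (-LinearMap.id)
  let F : (C₀(X, ℝ) × C₀(X, ℝ)) →ₗ.[ℝ] ℝ :=
    ⟨LinearMap.range D, (L.toLinearMap ∘ₗ LinearMap.fst ℝ _ _) ∘ₗ (LinearMap.range D).subtype⟩
  have N_hom (c : ℝ) (hc : 0 < c) (p) : N (c • p) = c * N p := by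
    have : (c • p).1.toBCF ⊔ (c • p).2.toBCF ⊔ 0 = c • (p.1.toBCF ⊔ p.2.toBCF ⊔ 0) := by
      ext x
      change max (max (c * p.1 x) (c * p.2 x)) 0 = c * max (max (p.1 x) (p.2 x)) 0
      rw [mul_max_of_nonneg _ _ hc.le, mul_max_of_nonneg _ _ hc.le, mul_zero]
    simp only [N, this, norm_smul, Real.norm_of_nonneg hc.le]
    ring
  have N_add (p q) : N (p + q) ≤ N p + N q := by
    refine (hN_le _ (add_nonneg (norm_nonneg _) (norm_nonneg _)) fun x ↦ ?_).trans_eq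
      (mul_add _ _ _)
    have hp := le_hN p x
    have hq := le_hN q x
    exact max_le (add_le_add ((le_max_left _ _).trans hp) ((le_max_left _ _).trans hq))
      (add_le_add ((le_max_right _ _).trans hp) ((le_max_right _ _).trans hq))
  have hF (p : F.domain) : F p ≤ N p := by
    obtain ⟨_, f, rfl⟩ := p
    refine ((le_abs_self _).trans (L.le_opNorm f)).trans
      (mul_le_mul_of_nonneg_left (norm_le_of_forall_abs_le f (norm_nonneg _) fun x ↦ ?_)
        (norm_nonneg L))
    exact le_hN (D f) x
  obtain ⟨G, hGF, hGN⟩ := exists_extension_of_le_sublinear F N N_hom N_add hF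
  have hA (f : C₀(X, ℝ)) {C : ℝ} (hC : 0 ≤ C) (h : ∀ x, f x ≤ C) : G (f, 0) ≤ ‖L‖ * C :=
    (hGN _).trans (hN_le _ hC fun x ↦ max_le (h x) hC)
  have hB (f : C₀(X, ℝ)) {C : ℝ} (hC : 0 ≤ C) (h : ∀ x, f x ≤ C) : G (0, f) ≤ ‖L‖ * C :=
    (hGN _).trans (hN_le _ hC fun x ↦ max_le hC (h x))
  refine ⟨G ∘ₗ LinearMap.inl ℝ _ _, G ∘ₗ LinearMap.inr ℝ _ _, fun f hf ↦ ?_, fun f hf ↦ ?_,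
    fun f ↦ hA f (norm_nonneg f) fun x ↦ (le_abs_self _).trans (abs_apply_le_norm f x),
    fun f ↦ hB f (norm_nonneg f) fun x ↦ (le_abs_self _).trans (abs_apply_le_norm f x),
    fun f ↦ ?_⟩
  · have := hA (-f) le_rfl fun x ↦ neg_nonpos.mpr (hf x)
    rw [show ((-f, 0) : C₀(X, ℝ) × C₀(X, ℝ)) = -(f, 0) by simp, map_neg] at this
    simpa using this
  · have := hB (-f) le_rfl fun x ↦ neg_nonpos.mpr (hf x)
    rw [show ((0, -f) : C₀(X, ℝ) × C₀(X, ℝ)) = -(0, f) by simp, map_neg] at this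
    simpa using this
  · have h₁ : G (f, -f) = L f := hGF ⟨(f, -f), ⟨f, rfl⟩⟩
    rw [← h₁, show ((f, -f) : C₀(X, ℝ) × C₀(X, ℝ)) = (f, 0) - (0, f) by simp, map_sub]
    rfl

variable [MeasurableSpace X] [BorelSpace X]

theorem integrable_of_isFiniteMeasure (f : C₀(X, ℝ)) (μ : Measure X) [IsFiniteMeasure μ] :
    Integrable f μ :=
  .of_bound (map_continuous f).aestronglyMeasurable ‖f‖ (.of_forall (abs_apply_le_norm f))

variable [T2Space X] [LocallyCompactSpace X]

/-- A bounded positive linear functional on `C₀(X, ℝ)` is integration against a finite measure. -/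
theorem exists_finiteMeasure_integral_eq (A : C₀(X, ℝ) →ₗ[ℝ] ℝ) (C : ℝ)
    (hA : ∀ f : C₀(X, ℝ), (∀ x, 0 ≤ f x) → 0 ≤ A f) (hC : ∀ f, A f ≤ C * ‖f‖) :
    ∃ μ : Measure X, IsFiniteMeasure μ ∧ ∀ f : C₀(X, ℝ), ∫ x, f x ∂μ = A f := by
  let J : C_c(X, ℝ) →ₗ[ℝ] C₀(X, ℝ) :=
    { toFun := fun f ↦ ⟨f.toContinuousMap, (f : C₀(X, ℝ)).zero_at_infty'⟩
      map_add' := fun _ _ ↦ rfl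
      map_smul' := fun _ _ ↦ rfl }
  let Λ : C_c(X, ℝ) →ₚ[ℝ] ℝ := PositiveLinearMap.mk₀ (A ∘ₗ J) fun f hf ↦ hA _ hf
  have hC' (f : C₀(X, ℝ)) : A f ≤ max C 0 * ‖f‖ :=
    (hC f).trans (mul_le_mul_of_nonneg_right (le_max_left _ _) (norm_nonneg f))
  have hfin : IsFiniteMeasure (RealRMK.rieszMeasure Λ) := by
    refine ⟨lt_of_le_of_lt ?_ (ENNReal.ofReal_lt_top (r := max C 0))⟩
    rw [isOpen_univ.measure_eq_iSup_isCompact]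
    refine iSup_le fun K ↦ iSup_le fun _ ↦ iSup_le fun hK ↦ ?_
    obtain ⟨f, hf₁, -, hf₂, hf₃⟩ := exists_continuous_one_zero_of_isCompact hK isClosed_empty
      (Set.disjoint_empty K)
    let g : C_c(X, ℝ) := ⟨f, hf₂⟩
    refine (RealRMK.rieszMeasure_le_of_eq_one Λ (f := g) (fun x ↦ (hf₃ x).1) hK hf₁).trans
      (ENNReal.ofReal_le_ofReal ((hC' (J g)).trans (mul_le_of_le_one_right (le_max_right _ _) ?_)))
    exact norm_le_of_forall_abs_le _ zero_le_one fun x ↦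
      (abs_of_nonneg (hf₃ x).1).trans_le (hf₃ x).2
  refine ⟨RealRMK.rieszMeasure Λ, hfin, fun f ↦ ?_⟩
  set μ := RealRMK.rieszMeasure Λ
  refine eq_of_forall_dist_le fun δ hδ ↦ ?_
  set M := max C 0 + μ.real Set.univ + 1
  have hM : 0 < M := by positivity
  obtain ⟨g, hg⟩ := exists_compactlySupported_abs_sub_le f (div_pos hδ hM)
  have hJ : ‖f - J g‖ ≤ δ / M := norm_le_of_forall_abs_le _ (div_pos hδ hM).le hg
  have hAle : |A (f - J g)| ≤ max C 0 * (δ / M) := by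
    refine abs_le'.mpr ⟨(hC' _).trans ?_, ?_⟩
    · gcongr
    · rw [← map_neg]
      refine (hC' _).trans ?_
      rw [norm_neg]
      gcongr
  have h_int : |∫ x, (f - J g) x ∂μ| ≤ δ / M * μ.real Set.univ :=
    norm_integral_le_of_norm_le_const (f := ⇑(f - J g)) (.of_forall hg)
  have hsub : ∫ x, (f - J g) x ∂μ = ∫ x, f x ∂μ - ∫ x, J g x ∂μ :=
    integral_sub (integrable_of_isFiniteMeasure f μ) (integrable_of_isFiniteMeasure (J g) μ)
  have hg' : ∫ x, J g x ∂μ = A (J g) := RealRMK.integral_rieszMeasure Λ g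
  rw [map_sub] at hAle
  rw [hsub, hg'] at h_int
  rw [Real.dist_eq]
  calc |∫ x, f x ∂μ - A f|
      = |(∫ x, f x ∂μ - A (J g)) - (A f - A (J g))| := by ring_nf
    _ ≤ _ := abs_sub _ _
    _ ≤ δ / M * μ.real Set.univ + max C 0 * (δ / M) := add_le_add h_int hAle
    _ ≤ δ / M * M := by
        have := div_pos hδ hM
        simp only [M]
        nlinarith
    _ = δ := div_mul_cancel₀ _ (ne_of_gt hM)

/-- Every bounded linear functional on `C₀(X, ℝ)` is the difference of the integrals against two
finite measures. -/
theorem exists_finiteMeasure_integral_sub_eq (L : C₀(X, ℝ) →L[ℝ] ℝ) :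
    ∃ μ ν : Measure X, IsFiniteMeasure μ ∧ IsFiniteMeasure ν ∧
      ∀ f : C₀(X, ℝ), L f = ∫ x, f x ∂μ - ∫ x, f x ∂ν := by
  obtain ⟨A, B, hA, hB, hAL, hBL, hL⟩ := exists_positive_sub_eq L
  obtain ⟨μ, hμ, hμA⟩ := exists_finiteMeasure_integral_eq A _ hA hAL
  obtain ⟨ν, hν, hνB⟩ := exists_finiteMeasure_integral_eq B _ hB hBL
  exact ⟨μ, ν, hμ, hν, fun f ↦ by rw [hμA, hνB, hL]⟩

end ZeroAtInftyContinuousMap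

/-- If a finite signed measure, written as a difference of two finite measures, is invariant under
all translations of a noncompact group, then it vanishes. -/
theorem integral_eq_of_forall_add_map_eq {E : Type*} [NormedAddCommGroup E] [ProperSpace E]
    [NoncompactSpace E] [MeasurableSpace E] [BorelSpace E] (μ ν : Measure E) [IsFiniteMeasure μ]
    [IsFiniteMeasure ν] (h : ∀ a, μ + ν.map (· + a) = ν + μ.map (· + a)) (f : C₀(E, ℝ)) :
    ∫ x, f x ∂μ = ∫ x, f x ∂ν := by
  have key (ρ : Measure E) [IsFiniteMeasure ρ] :
      Tendsto (fun a ↦ ∫ x, f (x + a) ∂ρ) (cocompact E) (𝓝 0) := by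
    have : (cocompact E).IsCountablyGenerated := by
      rw [← Metric.cobounded_eq_cocompact, ← comap_norm_atTop]
      infer_instance
    rw [← integral_zero E ℝ (μ := ρ)]
    refine tendsto_integral_filter_of_dominated_convergence (fun _ ↦ ‖f‖)
      (.of_forall fun a ↦ Continuous.aestronglyMeasurable (by fun_prop))
      (.of_forall fun a ↦ .of_forall fun x ↦ f.abs_apply_le_norm _) (integrable_const _)
      (.of_forall fun x ↦ (zero_at_infty f).comp ?_)
    exact (Homeomorph.addLeft x).isClosedEmbedding.tendsto_cocompact
  have hshift (a : E) :
      ∫ x, f x ∂μ - ∫ x, f x ∂ν = ∫ x, f (x + a) ∂μ - ∫ x, f (x + a) ∂ν := by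
    have hmap (ρ : Measure E) : ∫ x, f x ∂ρ.map (· + a) = ∫ x, f (x + a) ∂ρ :=
      integral_map (by fun_prop) (map_continuous f).aestronglyMeasurable
    have := congrArg (fun ρ ↦ ∫ x, f x ∂ρ) (h a)
    simp only at this
    rw [integral_add_measure (f.integrable_of_isFiniteMeasure _) (f.integrable_of_isFiniteMeasure _),
      integral_add_measure (f.integrable_of_isFiniteMeasure _) (f.integrable_of_isFiniteMeasure _),
      hmap, hmap] at this
    linarith
  have hlim := (key μ).sub (key ν)
  simp only [← hshift, sub_zero] at hlim
  exact sub_eq_zero.mp (tendsto_nhds_unique tendsto_const_nhds hlim)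

/-- In a real normed space, a submodule on which only the zero functional vanishes is dense. -/
theorem Submodule.dense_of_forall_dual_eq_zero {V : Type*} [NormedAddCommGroup V]
    [NormedSpace ℝ V] (W : Submodule ℝ V)
    (h : ∀ L : V →L[ℝ] ℝ, (∀ w ∈ W, L w = 0) → L = 0) : Dense (W : Set V) := by
  intro v
  by_contra hv
  obtain ⟨L, u, hLu, huv⟩ := geometric_hahn_banach_closed_point
    W.topologicalClosure.convex W.isClosed_topologicalClosure hv
  have hu : 0 < u := by simpa using hLu 0 (zero_mem _)
  have hL : L = 0 := h L fun w hw ↦ by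
    by_contra hne
    have := hLu ((u / L w) • w) (W.le_topologicalClosure (W.smul_mem _ hw))
    rw [map_smul, smul_eq_mul, div_mul_cancel₀ _ hne] at this
    exact this.false
  simp [hL] at huv
  linarith

/-- A map whose means separate probability measures has means separating finite measures of equal
mass. -/
theorem eq_of_characteristic {E H : Type*} [MeasurableSpace E] [NormedAddCommGroup H]
    [NormedSpace ℝ H] {Φ : E → H}
    (hchar : ∀ P Q : Measure E, IsProbabilityMeasure P → IsProbabilityMeasure Q →
      (∫ x, Φ x ∂P) = (∫ x, Φ x ∂Q) → P = Q)
    (μ ν : Measure E) [IsFiniteMeasure μ] [IsFiniteMeasure ν]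
    (hmass : μ Set.univ = ν Set.univ) (h : ∫ x, Φ x ∂μ = ∫ x, Φ x ∂ν) : μ = ν := by
  obtain hμ | hμ := eq_or_ne μ 0
  · rw [hμ, eq_comm, ← Measure.measure_univ_eq_zero, ← hmass, hμ]
    simp
  have hμ0 : μ Set.univ ≠ 0 := Measure.measure_univ_ne_zero.mpr hμ
  have hμt : μ Set.univ ≠ ⊤ := measure_ne_top μ _
  have := hchar ((μ Set.univ)⁻¹ • μ) ((μ Set.univ)⁻¹ • ν)
    ⟨by simp [ENNReal.inv_mul_cancel hμ0 hμt]⟩ ⟨by simp [← hmass, ENNReal.inv_mul_cancel hμ0 hμt]⟩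
    (by rw [integral_smul_measure, integral_smul_measure, h])
  simpa [smul_smul, ENNReal.mul_inv_cancel hμ0 hμt] using congrArg (μ Set.univ • ·) this

section FeatureMap

variable {E : Type*} [NormedAddCommGroup E] {H : Type*} [NormedAddCommGroup H]
  [InnerProductSpace ℝ H] {ψ : E → ℝ} {Φ : E → H}

theorem norm_sq_of_inner_eq_sub (hΦ : ∀ x y, ⟪Φ x, Φ y⟫ = ψ (x - y)) (x : E) :
    ‖Φ x‖ ^ 2 = ψ 0 := by
  rw [← real_inner_self_eq_norm_sq, hΦ, sub_self]

theorem continuous_of_inner_eq_sub_s14 (hψ : Continuous ψ) (hΦ : ∀ x y, ⟪Φ x, Φ y⟫ = ψ (x - y)) :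
    Continuous Φ := by
  refine continuous_iff_continuousAt.mpr fun y ↦ tendsto_iff_norm_sub_tendsto_zero.mpr ?_
  have hnorm (x : E) : ‖Φ x - Φ y‖ = √(2 * ψ 0 - 2 * ψ (x - y)) := by
    rw [eq_comm, Real.sqrt_eq_iff_eq_sq _ (norm_nonneg _) , norm_sub_sq_real,
      norm_sq_of_inner_eq_sub hΦ, norm_sq_of_inner_eq_sub hΦ, hΦ]
    · ring
    · have := sq_nonneg ‖Φ x - Φ y‖
      rw [norm_sub_sq_real, norm_sq_of_inner_eq_sub hΦ, norm_sq_of_inner_eq_sub hΦ, hΦ] at this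
      linarith
  simp only [hnorm]
  have : Continuous fun x ↦ √(2 * ψ 0 - 2 * ψ (x - y)) := by fun_prop
  simpa using this.tendsto y

theorem integrable_of_inner_eq_sub [SecondCountableTopology E] [MeasurableSpace E] [BorelSpace E]
    (hψ : Continuous ψ) (hΦ : ∀ x y, ⟪Φ x, Φ y⟫ = ψ (x - y)) (μ : Measure E)
    [IsFiniteMeasure μ] : Integrable Φ μ :=
  .of_bound (continuous_of_inner_eq_sub_s14 hψ hΦ).aestronglyMeasurable (√(ψ 0))
    (.of_forall fun x ↦ Real.le_sqrt_of_sq_le (norm_sq_of_inner_eq_sub hΦ x).le)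

/-- If the feature map of a translation-invariant kernel on a noncompact space separates Borel
probability measures, then it separates differences of finite measures. -/
theorem integral_eq_of_characteristic [ProperSpace E] [NoncompactSpace E] [MeasurableSpace E]
    [BorelSpace E] [CompleteSpace H] (hψ : Continuous ψ) (hΦ : ∀ x y, ⟪Φ x, Φ y⟫ = ψ (x - y))
    (htotal : ∀ v : H, (∀ y, ⟪v, Φ y⟫ = 0) → v = 0)
    (hchar : ∀ P Q : Measure E, IsProbabilityMeasure P → IsProbabilityMeasure Q →
      (∫ x, Φ x ∂P) = (∫ x, Φ x ∂Q) → P = Q)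
    (μ ν : Measure E) [IsFiniteMeasure μ] [IsFiniteMeasure ν]
    (hμν : ∀ y, ∫ x, ψ (x - y) ∂μ = ∫ x, ψ (x - y) ∂ν) (f : C₀(E, ℝ)) :
    ∫ x, f x ∂μ = ∫ x, f x ∂ν := by
  have h_int (ρ : Measure E) [IsFiniteMeasure ρ] : Integrable Φ ρ :=
    integrable_of_inner_eq_sub hψ hΦ ρ
  have hinner (ρ : Measure E) [IsFiniteMeasure ρ] (y : E) :
      ⟪∫ x, Φ x ∂ρ, Φ y⟫ = ∫ x, ψ (x - y) ∂ρ := by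
    rw [real_inner_comm, ← integral_inner (h_int ρ)]
    simp only [real_inner_comm (Φ _) (Φ y), hΦ]
  have hmean (ρ σ : Measure E) [IsFiniteMeasure ρ] [IsFiniteMeasure σ]
      (h : ∀ y, ∫ x, ψ (x - y) ∂ρ = ∫ x, ψ (x - y) ∂σ) : ∫ x, Φ x ∂ρ = ∫ x, Φ x ∂σ :=
    sub_eq_zero.mp (htotal _ fun y ↦ by rw [inner_sub_left, hinner, hinner, h, sub_self])
  refine integral_eq_of_forall_add_map_eq μ ν (fun a ↦ ?_) f
  have hshift (ρ : Measure E) (y : E) :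
      ∫ x, ψ (x - y) ∂ρ.map (· + a) = ∫ x, ψ (x - (y - a)) ∂ρ := by
    rw [integral_map (by fun_prop) (Continuous.aestronglyMeasurable (by fun_prop))]
    congr with x
    congr 1
    abel
  have heq : ∫ x, Φ x ∂(μ + ν.map (· + a)) = ∫ x, Φ x ∂(ν + μ.map (· + a)) := by
    rw [integral_add_measure (h_int _) (h_int _), integral_add_measure (h_int _) (h_int _),
      hmean μ ν hμν, hmean (ν.map (· + a)) (μ.map (· + a)) fun y ↦ by
        rw [hshift, hshift, hμν]]
  have hmass : (μ + ν.map (· + a)) Set.univ = (ν + μ.map (· + a)) Set.univ := by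
    have hmap (ρ : Measure E) : ρ.map (· + a) Set.univ = ρ Set.univ := by
      rw [Measure.map_apply (by fun_prop) .univ, Set.preimage_univ]
    rw [Measure.add_apply, Measure.add_apply, hmap, hmap, add_comm]
  exact eq_of_characteristic hchar _ _ hmass heq

end FeatureMap

/-- Let `ψ : ℝᵈ → ℝ` be a nonzero bounded continuous positive definite
function vanishing at infinity and let `k(x,y) = ψ(x−y)` with RKHS `H`.  Then `k` is
c₀-universal iff `k` is characteristic to the set of all Borel probability measures on
`ℝᵈ`, i.e. `P ↦ ∫ k(·,x) dP(x) = ∫ Φ dP` is injective on Borel probability measures. -/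
theorem stmt14 {d : ℕ}
    (ψ : EuclideanSpace ℝ (Fin d) → ℝ) (hψne : ψ ≠ 0)
    (hψcont : Continuous ψ) (hψbdd : ∃ C : ℝ, ∀ x, |ψ x| ≤ C)
    (hψ0 : Tendsto ψ (cocompact (EuclideanSpace ℝ (Fin d))) (𝓝 0))
    (k : EuclideanSpace ℝ (Fin d) → EuclideanSpace ℝ (Fin d) → ℝ)
    (hkψ : ∀ x y, k x y = ψ (x - y))
    {H : Type*} [NormedAddCommGroup H] [InnerProductSpace ℝ H] [CompleteSpace H]
    (T : H →ₗ[ℝ] (EuclideanSpace ℝ (Fin d) → ℝ)) (hT : Function.Injective T)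
    (Φ : EuclideanSpace ℝ (Fin d) → H)
    (hk : ∀ x y, k x y = ⟪Φ x, Φ y⟫)
    (hrepro : ∀ (f : H) x, T f x = ⟪f, Φ x⟫) :
    (∀ (g : C₀(EuclideanSpace ℝ (Fin d), ℝ)) (ε : ℝ), 0 < ε →
        ∃ f : H, ∀ x, |T f x - g x| ≤ ε) ↔
      (∀ P Q : Measure (EuclideanSpace ℝ (Fin d)),
        IsProbabilityMeasure P → IsProbabilityMeasure Q →
        (∫ x, Φ x ∂P) = (∫ x, Φ x ∂Q) → P = Q) := by
  have hΦ (x y) : ⟪Φ x, Φ y⟫ = ψ (x - y) := by rw [← hk, hkψ]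
  constructor
  · intro huniv P Q hP hQ hPQ
    refine Measure.ext_of_integral_eq_on_compactlySupported fun g ↦
      eq_of_forall_dist_le fun ε hε ↦ ?_
    obtain ⟨f, hf⟩ := huniv (g : C₀(EuclideanSpace ℝ (Fin d), ℝ)) (ε / 2) (half_pos hε)
    have hmean (ρ : Measure (EuclideanSpace ℝ (Fin d))) [IsProbabilityMeasure ρ] :
        |⟪f, ∫ x, Φ x ∂ρ⟫ - ∫ x, g x ∂ρ| ≤ ε / 2 := by
      have h_int := integrable_of_inner_eq_sub hψcont hΦ ρ
      rw [← integral_inner h_int, ← integral_sub (h_int.const_inner f) g.integrable]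
      have hb : ∀ x, ‖⟪f, Φ x⟫ - g x‖ ≤ ε / 2 := fun x ↦ by
        rw [← hrepro]
        exact hf x
      simpa using norm_integral_le_of_norm_le_const (μ := ρ) (.of_forall hb)
    have h₁ := hmean P
    have h₂ := hmean Q
    rw [← hPQ] at h₂
    rw [Real.dist_eq]
    rw [abs_le] at *
    constructor <;> linarith
  · intro hchar g ε hε
    obtain rfl | hd := Nat.eq_zero_or_pos d
    · have hψ0 : ψ 0 ≠ 0 := fun h ↦ hψne (funext fun x ↦ by rw [Subsingleton.elim x 0, h]; rfl)
      refine ⟨(g 0 / ψ 0) • Φ 0, fun x ↦ ?_⟩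
      rw [hrepro, inner_smul_left, hΦ, Subsingleton.elim x 0]
      simp [hψ0, hε.le]
    have : Nonempty (Fin d) := ⟨⟨0, hd⟩⟩
    have : NoncompactSpace (EuclideanSpace ℝ (Fin d)) := NormedSpace.noncompactSpace ℝ _
    have htotal (v : H) (hv : ∀ y, ⟪v, Φ y⟫ = 0) : v = 0 :=
      hT (funext fun y ↦ by rw [hrepro, hv, map_zero]; rfl)
    let κ (y : EuclideanSpace ℝ (Fin d)) : C₀(EuclideanSpace ℝ (Fin d), ℝ) :=
      ⟨⟨fun x ↦ ψ (x - y), by fun_prop⟩,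
        hψ0.comp (Homeomorph.subRight y).isClosedEmbedding.tendsto_cocompact⟩
    have hdense : Dense (Submodule.span ℝ (Set.range κ) : Set C₀(EuclideanSpace ℝ (Fin d), ℝ)) := by
      refine Submodule.dense_of_forall_dual_eq_zero _ fun L hL ↦ ?_
      obtain ⟨μ, ν, hμ, hν, hLμν⟩ := ZeroAtInftyContinuousMap.exists_finiteMeasure_integral_sub_eq L
      ext f
      rw [hLμν, _root_.zero_apply, sub_eq_zero]
      refine integral_eq_of_characteristic hψcont hΦ htotal hchar μ ν (fun y ↦ ?_) f
      rw [← sub_eq_zero]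
      exact (hLμν (κ y)).symm.trans (hL _ (Submodule.subset_span ⟨y, rfl⟩))
    have hrange (w) (hw : w ∈ Submodule.span ℝ (Set.range κ)) : ∃ f : H, ∀ x, T f x = w x := by
      induction hw using Submodule.span_induction with
      | mem w hw =>
        obtain ⟨y, rfl⟩ := hw
        exact ⟨Φ y, fun x ↦ by rw [hrepro, real_inner_comm, hΦ]; rfl⟩
      | zero => exact ⟨0, fun x ↦ by simp⟩
      | add w₁ w₂ _ _ h₁ h₂ =>
        obtain ⟨f₁, hf₁⟩ := h₁
        obtain ⟨f₂, hf₂⟩ := h₂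
        exact ⟨f₁ + f₂, fun x ↦ by simp [hf₁, hf₂]⟩
      | smul c w _ h =>
        obtain ⟨f, hf⟩ := h
        exact ⟨c • f, fun x ↦ by simp [hf]⟩
    obtain ⟨w, hw, hwε⟩ := hdense.exists_dist_lt g hε
    obtain ⟨f, hf⟩ := hrange w hw
    refine ⟨f, fun x ↦ ?_⟩
    rw [hf, abs_sub_comm]
    exact ((g - w).abs_apply_le_norm x).trans (dist_eq_norm g w ▸ hwε.le)
end

section
/- Let k be a radial kernel on ℝ^d, i.e., k(x,y) = ∫_{[0,∞)} e^{−t‖x−y‖²₂} dν(t) for a finite nonnegative Borel measure ν on [0,∞) with ν ≠ 0. Then k is cc-universal if and only if k is characteristic to the set of all Borel probability measures on ℝ^d. -/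
open MeasureTheory Filter Topology RealInnerProductSpace ProbabilityTheory

section SpectralMeasure

variable {E : Type*} [NormedAddCommGroup E] [InnerProductSpace ℝ E] [FiniteDimensional ℝ E]
  [MeasurableSpace E] [BorelSpace E]

lemma integral_cos_inner_stdGaussian (x : E) :
    ∫ w, Real.cos ⟪w, x⟫ ∂(stdGaussian E) = Real.exp (-‖x‖ ^ 2 / 2) := by
  have hint : Integrable (fun w : E ↦ Complex.exp (⟪w, x⟫ * Complex.I)) (stdGaussian E) := by
    refine Integrable.of_bound (by fun_prop) 1 (ae_of_all _ fun w ↦ ?_)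
    rw [Complex.norm_exp_ofReal_mul_I]
  have h := congrArg Complex.re (charFun_stdGaussian x)
  have h' := Complex.reCLM.integral_comp_comm hint
  simp only [Complex.reCLM_apply, Complex.exp_ofReal_mul_I_re] at h'
  rw [charFun_apply, ← h'] at h
  rw [h]
  norm_cast

instance isOpenPosMeasure_stdGaussian : (stdGaussian E).IsOpenPosMeasure := by
  have : (gaussianReal 0 1).IsOpenPosMeasure :=
    (gaussianReal_absolutelyContinuous' 0 one_ne_zero).isOpenPosMeasure
  rw [stdGaussian]
  refine Continuous.isOpenPosMeasure_map (by fun_prop) fun x ↦ ?_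
  refine ⟨fun i ↦ (stdOrthonormalBasis ℝ E).repr x i, ?_⟩
  exact (stdOrthonormalBasis ℝ E).sum_repr x

/-- The Fourier transform of the radial function `x ↦ ∫ exp (-t ‖x‖²) dν(t)`: the mixture of the
centred Gaussian measures with covariance `2t • id`, where `t` is distributed as `ν`. -/
noncomputable def gaussianMixture (E : Type*) [NormedAddCommGroup E] [InnerProductSpace ℝ E]
    [FiniteDimensional ℝ E] [MeasurableSpace E] (ν : Measure ℝ) : Measure E :=
  (ν.prod (stdGaussian E)).map fun p ↦ √(2 * p.1) • p.2

instance (ν : Measure ℝ) [IsFiniteMeasure ν] : IsFiniteMeasure (gaussianMixture E ν) := by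
  unfold gaussianMixture
  infer_instance

lemma integral_cos_inner_gaussianMixture (ν : Measure ℝ) [IsFiniteMeasure ν]
    (hν : ν (Set.Iio 0) = 0) (x : E) :
    ∫ w, Real.cos ⟪w, x⟫ ∂(gaussianMixture E ν) = ∫ t, Real.exp (-(t * ‖x‖ ^ 2)) ∂ν := by
  rw [gaussianMixture, integral_map (by fun_prop) (by fun_prop), integral_prod]
  · have hnonneg : ∀ᵐ t ∂ν, 0 ≤ t := by
      rw [ae_iff]
      simpa [Set.Iio] using hν
    refine integral_congr_ae ?_
    filter_upwards [hnonneg] with t ht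
    have h := integral_cos_inner_stdGaussian (√(2 * t) • x)
    simp only [real_inner_smul_right, norm_smul, Real.norm_eq_abs, mul_pow, sq_abs] at h
    rw [Real.sq_sqrt (by positivity)] at h
    simp only [real_inner_smul_left, h]
    congr 1
    ring
  · refine Integrable.of_bound (by fun_prop) 1 (ae_of_all _ fun p ↦ ?_)
    exact Real.abs_cos_le_one _

lemma isOpenPosMeasure_gaussianMixture (ν : Measure ℝ) [IsFiniteMeasure ν]
    (hν : ν (Set.Ioi 0) ≠ 0) : (gaussianMixture E ν).IsOpenPosMeasure := by
  refine ⟨fun U hU hUne hzero ↦ hν ?_⟩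
  have hmeas : Measurable fun p : ℝ × E ↦ √(2 * p.1) • p.2 := by fun_prop
  rw [gaussianMixture, Measure.map_apply hmeas hU.measurableSet,
    Measure.measure_prod_null (hmeas hU.measurableSet)] at hzero
  refine measure_mono_null (t := {t | ¬ _}) (fun t ht hzt ↦ ?_) (ae_iff.1 hzero)
  have ht' : √(2 * t) ≠ 0 := (Real.sqrt_pos.2 (mul_pos two_pos ht)).ne'
  have hopen : IsOpen ((fun w : E ↦ √(2 * t) • w) ⁻¹' U) := hU.preimage (by fun_prop)
  obtain ⟨u, hu⟩ := hUne
  refine hopen.measure_ne_zero (stdGaussian E) ⟨(√(2 * t))⁻¹ • u, ?_⟩ hzt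
  rwa [Set.mem_preimage, smul_inv_smul₀ ht']

end SpectralMeasure

/-- A function whose finite linear combinations are dominated by those of the feature map belongs
to the reproducing kernel Hilbert space. -/
lemma exists_inner_eq_of_abs_sum_le {X H : Type*} [NormedAddCommGroup H] [InnerProductSpace ℝ H]
    [CompleteSpace H] (Φ : X → H) (F : X → ℝ) (C : ℝ)
    (hF : ∀ c : X →₀ ℝ, |c.sum fun x a ↦ a * F x| ≤ C * ‖c.sum fun x a ↦ a • Φ x‖) :
    ∃ f : H, ∀ x, ⟪f, Φ x⟫ = F x := by
  set L : (X →₀ ℝ) →ₗ[ℝ] H := Finsupp.linearCombination ℝ Φ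
  set ℓ : (X →₀ ℝ) →ₗ[ℝ] ℝ := Finsupp.linearCombination ℝ F
  have hbound (c : X →₀ ℝ) : ‖ℓ c‖ ≤ C * ‖L c‖ := hF c
  have hker : L.ker ≤ ℓ.ker := fun c hc ↦ by
    have h := hbound c
    rw [LinearMap.mem_ker.1 hc, norm_zero, mul_zero] at h
    exact norm_le_zero_iff.1 h
  obtain ⟨g, hg⟩ : ∃ g : L.range →ₗ[ℝ] ℝ, ∀ c, g (L.rangeRestrict c) = ℓ c := by
    refine ⟨(L.ker.liftQ ℓ hker) ∘ₗ L.quotKerEquivRange.symm.toLinearMap, fun c ↦ ?_⟩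
    have : L.quotKerEquivRange.symm (L.rangeRestrict c) = L.ker.mkQ c :=
      L.quotKerEquivRange_symm_apply_image c _
    simp [this]
  have hgbound (v : L.range) : ‖g v‖ ≤ C * ‖v‖ := by
    obtain ⟨c, rfl⟩ := L.surjective_rangeRestrict v
    rw [hg]
    exact hbound c
  obtain ⟨G, hG, -⟩ := exists_extension_norm_eq L.range (g.mkContinuous C hgbound)
  refine ⟨(InnerProductSpace.toDual ℝ H).symm G, fun x ↦ ?_⟩
  rw [InnerProductSpace.toDual_symm_apply]
  have hL : L (Finsupp.single x 1) = Φ x := by simp [L]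
  have hℓ : ℓ (Finsupp.single x 1) = F x := by simp [ℓ]
  rw [← hL, ← hℓ, ← hg]
  exact hG (L.rangeRestrict (Finsupp.single x 1))

lemma sq_sum_cos_le {E : Type*} [NormedAddCommGroup E] [InnerProductSpace ℝ E]
    (c : E →₀ ℝ) (θ : ℝ) (w : E) :
    (c.sum fun x a ↦ a * Real.cos (⟪w, x⟫ + θ)) ^ 2 ≤
      c.sum fun x a ↦ c.sum fun y b ↦ a * b * Real.cos ⟪w, x - y⟫ := by
  have h : (c.sum fun x a ↦ c.sum fun y b ↦ a * b * Real.cos ⟪w, x - y⟫) =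
      (c.sum fun x a ↦ a * Real.cos (⟪w, x⟫ + θ)) ^ 2 +
        (c.sum fun x a ↦ a * Real.sin (⟪w, x⟫ + θ)) ^ 2 := by
    simp only [Finsupp.sum, sq, Finset.sum_mul_sum, ← Finset.sum_add_distrib]
    refine Finset.sum_congr rfl fun x _ ↦ Finset.sum_congr rfl fun y _ ↦ ?_
    rw [show ⟪w, x - y⟫ = (⟪w, x⟫ + θ) - (⟪w, y⟫ + θ) by rw [inner_sub_right]; ring,
      Real.cos_sub]
    ring
  rw [h]
  exact le_add_of_nonneg_right (sq_nonneg _)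

section Bochner

variable {E : Type*} [NormedAddCommGroup E] [InnerProductSpace ℝ E] [MeasurableSpace E]
  [BorelSpace E] [SecondCountableTopology E]
  {H : Type*} [NormedAddCommGroup H] [InnerProductSpace ℝ H]
  {γ : Measure E} [IsFiniteMeasure γ] {Φ : E → H}

lemma integrable_cos_inner (μ : Measure E) [IsFiniteMeasure μ] (x : E) (θ : ℝ) :
    Integrable (fun w ↦ Real.cos (⟪w, x⟫ + θ)) μ :=
  Integrable.of_bound (by fun_prop) 1 (ae_of_all _ fun _ ↦ Real.abs_cos_le_one _)

lemma integral_sum_cos_eq_norm_sq (hΦ : ∀ x y, ⟪Φ x, Φ y⟫ = ∫ w, Real.cos ⟪w, x - y⟫ ∂γ)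
    (c : E →₀ ℝ) :
    ∫ w, (c.sum fun x a ↦ c.sum fun y b ↦ a * b * Real.cos ⟪w, x - y⟫) ∂γ =
      ‖c.sum fun x a ↦ a • Φ x‖ ^ 2 := by
  have hint (x : E) : Integrable (fun w ↦ Real.cos ⟪w, x⟫) γ := by
    simpa using integrable_cos_inner γ x 0
  rw [← real_inner_self_eq_norm_sq]
  simp only [Finsupp.sum, sum_inner, inner_sum, real_inner_smul_left, real_inner_smul_right]
  rw [integral_finsetSum _ fun x _ ↦ integrable_finsetSum _ fun y _ ↦ (hint _).const_mul _]
  refine Finset.sum_congr rfl fun x _ ↦ ?_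
  rw [integral_finsetSum _ fun y _ ↦ (hint _).const_mul _]
  refine Finset.sum_congr rfl fun y _ ↦ ?_
  rw [integral_const_mul, ← hΦ, real_inner_comm]
  ring

lemma exists_inner_eq_setAverage_cos [CompleteSpace H]
    (hΦ : ∀ x y, ⟪Φ x, Φ y⟫ = ∫ w, Real.cos ⟪w, x - y⟫ ∂γ)
    {S : Set E} (hS : γ S ≠ 0) (θ : ℝ) :
    ∃ f : H, ∀ x, ⟪f, Φ x⟫ = ⨍ w in S, Real.cos (⟪w, x⟫ + θ) ∂γ := by
  refine exists_inner_eq_of_abs_sum_le Φ _ (√(γ.real S)⁻¹) fun c ↦ ?_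
  set G : E → ℝ := fun w ↦ c.sum fun x a ↦ a * Real.cos (⟪w, x⟫ + θ) with hGdef
  set K : E → ℝ := fun w ↦ c.sum fun x a ↦ c.sum fun y b ↦ a * b * Real.cos ⟪w, x - y⟫
  have hGK (w : E) : G w ^ 2 ≤ K w := sq_sum_cos_le c θ w
  have hKint : Integrable K γ :=
    integrable_finsetSum _ fun x _ ↦ integrable_finsetSum _ fun y _ ↦ by
      simpa using (integrable_cos_inner γ (x - y) 0).const_mul (c x * c y)
  have hGint : Integrable G γ :=
    integrable_finsetSum _ fun x _ ↦ (integrable_cos_inner γ x θ).const_mul _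
  have hG2int : Integrable (fun w ↦ G w ^ 2) γ :=
    hKint.mono' (hGint.aestronglyMeasurable.pow 2) (ae_of_all _ fun w ↦ by
      rw [Real.norm_of_nonneg (sq_nonneg _)]; exact hGK w)
  have havg : (c.sum fun x a ↦ a * ⨍ w in S, Real.cos (⟪w, x⟫ + θ) ∂γ) = ⨍ w in S, G w ∂γ := by
    simp only [setAverage_eq, smul_eq_mul, hGdef, Finsupp.sum]
    rw [integral_finsetSum _ fun x _ ↦ ((integrable_cos_inner γ x θ).const_mul _).restrict,
      Finset.mul_sum]
    refine Finset.sum_congr rfl fun x _ ↦ ?_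
    rw [integral_const_mul]
    ring
  have hjensen : (⨍ w in S, G w ∂γ) ^ 2 ≤ ⨍ w in S, G w ^ 2 ∂γ :=
    (even_two.convexOn_pow (𝕜 := ℝ)).map_set_average_le (by fun_prop) isClosed_univ hS
      (measure_ne_top _ _) (by simp) hGint.integrableOn hG2int.integrableOn
  rw [havg]
  refine abs_le_of_sq_le_sq ?_ (by positivity)
  rw [mul_pow, Real.sq_sqrt (by positivity), ← integral_sum_cos_eq_norm_sq hΦ]
  refine hjensen.trans ?_
  rw [setAverage_eq, smul_eq_mul]
  gcongr
  calc ∫ w in S, G w ^ 2 ∂γ ≤ ∫ w, G w ^ 2 ∂γ :=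
        setIntegral_le_integral hG2int (ae_of_all _ fun w ↦ sq_nonneg _)
    _ ≤ ∫ w, K w ∂γ := integral_mono hG2int hKint hGK

lemma exists_inner_near_cos [CompleteSpace H] [γ.IsOpenPosMeasure]
    (hΦ : ∀ x y, ⟪Φ x, Φ y⟫ = ∫ w, Real.cos ⟪w, x - y⟫ ∂γ) (w : E) (θ : ℝ) {r : ℝ} (hr : 0 < r) :
    ∃ f : H, ∀ x, |⟪f, Φ x⟫| ≤ 1 ∧ |⟪f, Φ x⟫ - Real.cos (⟪w, x⟫ + θ)| ≤ r * ‖x‖ := by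
  have hS : γ (Metric.ball w r) ≠ 0 := (Metric.measure_ball_pos γ w hr).ne'
  obtain ⟨f, hf⟩ := exists_inner_eq_setAverage_cos hΦ hS θ
  have hmem (x : E) {c δ : ℝ} (h : ∀ v ∈ Metric.ball w r, |Real.cos (⟪v, x⟫ + θ) - c| ≤ δ) :
      |⟪f, Φ x⟫ - c| ≤ δ := by
    rw [hf]
    have := (convex_closedBall c δ).set_average_mem Metric.isClosed_closedBall hS
      (measure_ne_top γ _)
      (ae_restrict_of_forall_mem Metric.isOpen_ball.measurableSet fun v hv ↦ h v hv)
      (integrable_cos_inner γ x θ).integrableOn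
    exact this
  refine ⟨f, fun x ↦ ⟨?_, hmem x fun v hv ↦ ?_⟩⟩
  · simpa using hmem x (c := 0) (δ := 1) fun v _ ↦ by simpa using Real.abs_cos_le_one _
  · calc |Real.cos (⟪v, x⟫ + θ) - Real.cos (⟪w, x⟫ + θ)|
        ≤ |(⟪v, x⟫ + θ) - (⟪w, x⟫ + θ)| := Real.abs_cos_sub_cos_le _ _
      _ = |⟪v - w, x⟫| := by rw [inner_sub_left]; ring_nf
      _ ≤ ‖v - w‖ * ‖x‖ := abs_real_inner_le_norm _ _
      _ ≤ r * ‖x‖ := by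
        gcongr
        exact (mem_ball_iff_norm.1 hv).le

lemma continuous_of_inner_eq_integral_cos
    (hΦ : ∀ x y, ⟪Φ x, Φ y⟫ = ∫ w, Real.cos ⟪w, x - y⟫ ∂γ) : Continuous Φ := by
  have hcont : Continuous fun z : E ↦ ∫ w, Real.cos ⟪w, z⟫ ∂γ :=
    continuous_of_dominated (bound := fun _ ↦ 1) (fun z ↦ by fun_prop)
      (fun z ↦ ae_of_all _ fun w ↦ Real.abs_cos_le_one _) (integrable_const 1)
      (ae_of_all _ fun w ↦ by fun_prop)
  refine continuous_iff_continuousAt.2 fun x ↦ tendsto_iff_norm_sub_tendsto_zero.2 ?_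
  have hnorm (y : E) : ‖Φ y - Φ x‖ =
      √(2 * (∫ w, Real.cos ⟪w, (0 : E)⟫ ∂γ) - 2 * ∫ w, Real.cos ⟪w, y - x⟫ ∂γ) := by
    rw [← Real.sqrt_sq (norm_nonneg (Φ y - Φ x)), norm_sub_sq_real,
      ← real_inner_self_eq_norm_sq, ← real_inner_self_eq_norm_sq, hΦ, hΦ, hΦ, sub_self, sub_self]
    congr 1
    ring
  simp only [hnorm]
  refine Continuous.tendsto' ?_ x 0 (by simp)
  exact (continuous_const.sub (continuous_const.mul
    (hcont.comp (continuous_id.sub continuous_const)))).sqrt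

/-- If the spectral measure has full support, the kernel is characteristic. -/
lemma eq_of_integral_feature_eq [CompleteSpace E] [CompleteSpace H] [γ.IsOpenPosMeasure]
    (hΦ : ∀ x y, ⟪Φ x, Φ y⟫ = ∫ w, Real.cos ⟪w, x - y⟫ ∂γ)
    (P Q : Measure E) [IsFiniteMeasure P] [IsFiniteMeasure Q]
    (hPQ : ∫ x, Φ x ∂P = ∫ x, Φ x ∂Q) : P = Q := by
  have hcontΦ := continuous_of_inner_eq_integral_cos hΦ
  have hΦint (μ : Measure E) [IsFiniteMeasure μ] : Integrable Φ μ := by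
    refine Integrable.of_bound hcontΦ.aestronglyMeasurable ‖Φ 0‖ (ae_of_all _ fun x ↦ le_of_eq ?_)
    rw [← sq_eq_sq₀ (norm_nonneg _) (norm_nonneg _), ← real_inner_self_eq_norm_sq,
      ← real_inner_self_eq_norm_sq, hΦ, hΦ, sub_self, sub_self]
  have hcos (w : E) (θ : ℝ) :
      ∫ x, Real.cos (⟪w, x⟫ + θ) ∂P = ∫ x, Real.cos (⟪w, x⟫ + θ) ∂Q := by
    choose f hf using fun n : ℕ ↦ exists_inner_near_cos hΦ w θ (Nat.one_div_pos_of_nat (n := n))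
    have htendsto (μ : Measure E) [IsFiniteMeasure μ] :
        Tendsto (fun n ↦ ⟪f n, ∫ x, Φ x ∂μ⟫) atTop (𝓝 (∫ x, Real.cos (⟪w, x⟫ + θ) ∂μ)) := by
      simp only [← integral_inner (hΦint μ)]
      refine tendsto_integral_of_dominated_convergence (fun _ ↦ 1) (fun n ↦ by fun_prop)
        (integrable_const 1) (fun n ↦ ae_of_all _ fun x ↦ (hf n x).1) (ae_of_all _ fun x ↦ ?_)
      refine tendsto_iff_norm_sub_tendsto_zero.2 (squeeze_zero (fun n ↦ norm_nonneg _)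
        (fun n ↦ (hf n x).2) ?_)
      simpa using (tendsto_one_div_add_atTop_nhds_zero_nat (𝕜 := ℝ)).mul_const ‖x‖
    refine tendsto_nhds_unique (htendsto P) ?_
    rw [hPQ]
    exact htendsto Q
  refine Measure.ext_of_charFun (funext fun w ↦ ?_)
  have hint (μ : Measure E) [IsFiniteMeasure μ] :
      Integrable (fun x : E ↦ Complex.exp (⟪x, w⟫ * Complex.I)) μ := by
    refine Integrable.of_bound (by fun_prop) 1 (ae_of_all _ fun x ↦ ?_)
    rw [Complex.norm_exp_ofReal_mul_I]
  have hre (μ : Measure E) [IsFiniteMeasure μ] :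
      (charFun μ w).re = ∫ x, Real.cos (⟪w, x⟫ + 0) ∂μ := by
    have := Complex.reCLM.integral_comp_comm (hint μ)
    simp only [Complex.reCLM_apply, Complex.exp_ofReal_mul_I_re] at this
    rw [charFun_apply, ← this]
    simp only [real_inner_comm, add_zero]
  have him (μ : Measure E) [IsFiniteMeasure μ] :
      (charFun μ w).im = ∫ x, Real.cos (⟪w, x⟫ + -(Real.pi / 2)) ∂μ := by
    have := Complex.imCLM.integral_comp_comm (hint μ)
    simp only [Complex.imCLM_apply, Complex.exp_ofReal_mul_I_im] at this
    rw [charFun_apply, ← this]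
    simp only [real_inner_comm, ← sub_eq_add_neg, Real.cos_sub_pi_div_two]
  exact Complex.ext (by rw [hre, hre, hcos]) (by rw [him, him, hcos])

end Bochner

section Trigonometric

variable {E : Type*} [NormedAddCommGroup E] [InnerProductSpace ℝ E]

/-- The restriction to `Z` of the plane wave `x ↦ cos (⟪w, x⟫ + θ)`. -/
noncomputable def cosWave (Z : Set E) (w : E) (θ : ℝ) : C(Z, ℝ) :=
  ⟨fun x ↦ Real.cos (⟪w, (x : E)⟫ + θ), by fun_prop⟩

/-- The algebra of trigonometric polynomials on `Z`. -/
noncomputable def cosWaveSubalgebra (Z : Set E) : Subalgebra ℝ C(Z, ℝ) :=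
  (Submodule.span ℝ (Set.range fun p : E × ℝ ↦ cosWave Z p.1 p.2)).toSubalgebra
    (Submodule.subset_span ⟨(0, 0), by ext; simp [cosWave]⟩) fun f g hf hg ↦ by
      have hmul := Submodule.mul_mem_mul hf hg
      rw [Submodule.span_mul_span] at hmul
      refine Submodule.span_le.2 ?_ hmul
      rintro _ ⟨_, ⟨⟨w, θ⟩, rfl⟩, _, ⟨⟨v, η⟩, rfl⟩, rfl⟩
      have h : cosWave Z w θ * cosWave Z v η =
          (1 / 2 : ℝ) • (cosWave Z (w + v) (θ + η) + cosWave Z (w - v) (θ - η)) := by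
        ext x
        simp only [cosWave, ContinuousMap.mul_apply, ContinuousMap.coe_mk,
          ContinuousMap.smul_apply, ContinuousMap.add_apply, smul_eq_mul]
        rw [inner_add_left, inner_sub_left,
          show ⟪w, (x : E)⟫ + ⟪v, (x : E)⟫ + (θ + η) =
            (⟪w, (x : E)⟫ + θ) + (⟪v, (x : E)⟫ + η) by ring,
          show ⟪w, (x : E)⟫ - ⟪v, (x : E)⟫ + (θ - η) =
            (⟪w, (x : E)⟫ + θ) - (⟪v, (x : E)⟫ + η) by ring,
          Real.cos_add (_ + _) (_ + _), Real.cos_sub]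
        ring
      simp only [SetLike.mem_coe, h]
      exact Submodule.smul_mem _ _ (Submodule.add_mem _
        (Submodule.subset_span ⟨(w + v, θ + η), rfl⟩)
        (Submodule.subset_span ⟨(w - v, θ - η), rfl⟩))

lemma separatesPoints_cosWaveSubalgebra (Z : Set E) : (cosWaveSubalgebra Z).SeparatesPoints := by
  intro x y hxy
  set u : E := x - y with hu
  have hne : ‖u‖ ^ 2 ≠ 0 := by
    simpa [hu, sub_eq_zero, Subtype.coe_inj] using hxy
  set w : E := (Real.pi / ‖u‖ ^ 2) • u
  refine ⟨_, ⟨cosWave Z w (-⟪w, (y : E)⟫), Submodule.subset_span ⟨(w, _), rfl⟩, rfl⟩, ?_⟩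
  have hpi : ⟪w, (x : E)⟫ + -⟪w, (y : E)⟫ = Real.pi := by
    rw [← sub_eq_add_neg, ← inner_sub_right, ← hu, real_inner_smul_left,
      real_inner_self_eq_norm_sq, div_mul_cancel₀ _ hne]
  simp only [cosWave, ContinuousMap.coe_mk, hpi, add_neg_cancel, Real.cos_pi, Real.cos_zero]
  norm_num

/-- If the spectral measure has full support, the kernel is cc-universal. -/
lemma exists_inner_near_of_isCompact [MeasurableSpace E] [BorelSpace E] [SecondCountableTopology E]
    {H : Type*} [NormedAddCommGroup H] [InnerProductSpace ℝ H] [CompleteSpace H]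
    {γ : Measure E} [IsFiniteMeasure γ] [γ.IsOpenPosMeasure] {Φ : E → H}
    (hΦ : ∀ x y, ⟪Φ x, Φ y⟫ = ∫ w, Real.cos ⟪w, x - y⟫ ∂γ)
    {Z : Set E} (hZ : IsCompact Z) (g : C(Z, ℝ)) {ε : ℝ} (hε : 0 < ε) :
    ∃ f : H, ∀ x : Z, |⟪f, Φ x⟫ - g x| ≤ ε := by
  have : CompactSpace Z := isCompact_iff_compactSpace.1 hZ
  have happrox (p : C(Z, ℝ))
      (hp : p ∈ Submodule.span ℝ (Set.range fun p : E × ℝ ↦ cosWave Z p.1 p.2)) :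
      ∀ δ > 0, ∃ f : H, ∀ x : Z, |⟪f, Φ x⟫ - p x| ≤ δ := by
    induction hp using Submodule.span_induction with
    | mem p hp =>
      obtain ⟨⟨w, θ⟩, rfl⟩ := hp
      intro δ hδ
      obtain ⟨R, hR, hZR⟩ := hZ.isBounded.exists_pos_norm_le
      obtain ⟨f, hf⟩ := exists_inner_near_cos hΦ w θ (div_pos hδ hR)
      refine ⟨f, fun x ↦ (hf x).2.trans ?_⟩
      calc δ / R * ‖(x : E)‖ ≤ δ / R * R := by
            gcongr
            exact hZR x x.2
        _ = δ := div_mul_cancel₀ _ hR.ne'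
    | zero => exact fun δ hδ ↦ ⟨0, fun x ↦ by simpa using hδ.le⟩
    | add p q _ _ ihp ihq =>
      intro δ hδ
      obtain ⟨f, hf⟩ := ihp (δ / 2) (half_pos hδ)
      obtain ⟨f', hf'⟩ := ihq (δ / 2) (half_pos hδ)
      refine ⟨f + f', fun x ↦ ?_⟩
      rw [inner_add_left, ContinuousMap.add_apply, add_sub_add_comm]
      exact (abs_add_le _ _).trans ((add_le_add (hf x) (hf' x)).trans_eq (add_halves δ))
    | smul a p _ ih =>
      intro δ hδ
      obtain ⟨f, hf⟩ := ih (δ / (|a| + 1)) (by positivity)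
      refine ⟨a • f, fun x ↦ ?_⟩
      rw [real_inner_smul_left, ContinuousMap.smul_apply, smul_eq_mul, ← mul_sub, abs_mul]
      calc |a| * |⟪f, Φ x⟫ - p x| ≤ (|a| + 1) * (δ / (|a| + 1)) := by
            gcongr
            · linarith
            · exact hf x
        _ = δ := by field_simp
  obtain ⟨⟨p, hp⟩, hpg⟩ := ContinuousMap.exists_mem_subalgebra_near_continuous_of_separatesPoints
    (cosWaveSubalgebra Z) (separatesPoints_cosWaveSubalgebra Z) g g.continuous (ε / 2)
    (half_pos hε)
  obtain ⟨f, hf⟩ := happrox p hp (ε / 2) (half_pos hε)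
  refine ⟨f, fun x ↦ (abs_sub_le _ (p x) _).trans ?_⟩
  exact (add_le_add (hf x) (hpg x).le).trans_eq (add_halves ε)

end Trigonometric

/-- Let `k(x,y) = ∫_{[0,∞)} e^{−t‖x−y‖²} dν(t)` be a radial kernel on
`ℝᵈ`, where `ν ≠ 0` is a finite nonnegative Borel measure supported on `[0,∞)`, and let
`H` be its RKHS.  Then `k` is cc-universal iff `k` is characteristic to the set of all
Borel probability measures on `ℝᵈ`, i.e. `P ↦ ∫ k(·,x) dP(x) = ∫ Φ dP` is injective on
Borel probability measures. -/
theorem stmt16 {d : ℕ}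
    (ν : Measure ℝ) [IsFiniteMeasure ν] (hν0 : ν (Set.Iio (0 : ℝ)) = 0) (hνne : ν ≠ 0)
    (k : EuclideanSpace ℝ (Fin d) → EuclideanSpace ℝ (Fin d) → ℝ)
    (hkν : ∀ x y, k x y = ∫ t, Real.exp (-(t * ‖x - y‖ ^ 2)) ∂ν)
    {H : Type*} [NormedAddCommGroup H] [InnerProductSpace ℝ H] [CompleteSpace H]
    (T : H →ₗ[ℝ] (EuclideanSpace ℝ (Fin d) → ℝ)) (hT : Function.Injective T)
    (Φ : EuclideanSpace ℝ (Fin d) → H)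
    (hk : ∀ x y, k x y = ⟪Φ x, Φ y⟫)
    (hrepro : ∀ (f : H) x, T f x = ⟪f, Φ x⟫) :
    (∀ (Z : Set (EuclideanSpace ℝ (Fin d))), IsCompact Z →
        ∀ (g : C(Z, ℝ)) (ε : ℝ), 0 < ε →
          ∃ f : H, ∀ x : Z, |T f (x : EuclideanSpace ℝ (Fin d)) - g x| ≤ ε) ↔
      (∀ P Q : Measure (EuclideanSpace ℝ (Fin d)),
        IsProbabilityMeasure P → IsProbabilityMeasure Q →
        (∫ x, Φ x ∂P) = (∫ x, Φ x ∂Q) → P = Q) := by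
  by_cases hν : ν (Set.Ioi 0) = 0
  · have hzero : ∀ᵐ t ∂ν, t = 0 := by
      have hsub : {t : ℝ | ¬ t = 0} = Set.Iio 0 ∪ Set.Ioi 0 := by
        ext t
        simp
      rw [ae_iff, hsub]
      exact measure_union_null hν0 hν
    have hconst (x y : EuclideanSpace ℝ (Fin d)) : k x y = ν.real Set.univ := by
      rw [hkν, integral_congr_ae (g := fun _ ↦ (1 : ℝ)) (by
        filter_upwards [hzero] with t ht
        simp [ht])]
      simp
    have hΦconst (x y : EuclideanSpace ℝ (Fin d)) : Φ x = Φ y := by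
      rw [← sub_eq_zero, ← norm_eq_zero, ← sq_eq_zero_iff, norm_sub_sq_real,
        ← real_inner_self_eq_norm_sq, ← real_inner_self_eq_norm_sq, ← hk, ← hk, ← hk, hconst,
        hconst, hconst]
      ring
    constructor
    · intro huniv P Q hP hQ _
      have : Subsingleton (EuclideanSpace ℝ (Fin d)) := by
        refine ⟨fun x y ↦ by_contra fun hxy ↦ ?_⟩
        have hdist : 0 < dist x y := dist_pos.2 hxy
        obtain ⟨f, hf⟩ := huniv {x, y} (Set.toFinite _).isCompact
          ⟨fun z ↦ dist (z : EuclideanSpace ℝ (Fin d)) y, by fun_prop⟩ (dist x y / 3) (by positivity)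
        have hx := hf ⟨x, by simp⟩
        have hy := hf ⟨y, by simp⟩
        simp only [hrepro, hΦconst x y, ContinuousMap.coe_mk, dist_self, abs_le] at hx hy
        linarith [hx.1, hy.2]
      ext s _
      rcases s.eq_empty_or_nonempty with rfl | hs
      · simp
      · rw [hs.eq_univ, measure_univ, measure_univ]
    · intro hchar Z _ g ε hε
      have hsub : Subsingleton (EuclideanSpace ℝ (Fin d)) := by
        refine ⟨fun x y ↦ by_contra fun hxy ↦ hxy ?_⟩
        exact dirac_eq_dirac_iff.1
          (hchar (Measure.dirac x) (Measure.dirac y) inferInstance inferInstance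
            (by simp [hΦconst x y]))
      rcases isEmpty_or_nonempty Z with hZ | ⟨⟨z⟩⟩
      · exact ⟨0, fun x ↦ isEmptyElim x⟩
      · refine ⟨(g z / ν.real Set.univ) • Φ z, fun x ↦ ?_⟩
        have hpos : ν.real Set.univ ≠ 0 := by
          simpa [Measure.real, ENNReal.toReal_eq_zero_iff] using hνne
        rw [Subsingleton.elim x z, hrepro, real_inner_smul_left, ← hk, hconst,
          div_mul_cancel₀ _ hpos]
        simpa using hε.le
  · have := isOpenPosMeasure_gaussianMixture (E := EuclideanSpace ℝ (Fin d)) ν hν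
    have hΦ (x y : EuclideanSpace ℝ (Fin d)) : ⟪Φ x, Φ y⟫ =
        ∫ w, Real.cos ⟪w, x - y⟫ ∂(gaussianMixture (EuclideanSpace ℝ (Fin d)) ν) := by
      rw [← hk, hkν, integral_cos_inner_gaussianMixture ν hν0]
    refine iff_of_true (fun Z hZ g ε hε ↦ ?_) fun P Q _ _ hPQ ↦ eq_of_integral_feature_eq hΦ P Q hPQ
    simpa only [hrepro] using exists_inner_near_of_isCompact hΦ hZ g hε
end
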